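/- arXiv:1404.1690 — 3 statements merged into one kernel-verified Lean document; each statement's English description precedes it below -/
import Mathlib

section
/- Assume the admissibility hypotheses on φ¹, ψ¹, c₁, c₂. Then the full cone-adapted shearlet system SH(φ, ψ, ψ̃, c) — consisting of the functions (x₁, x₂) ↦ φ¹(x₁ − c₁ m₁) φ¹(x₂ − c₁ m₂) for m ∈ ℤ², the functions ψ_{j,k,m}(x₁, x₂) = 2^{3j/4} ψ¹(2^j x₁ + 2^{⌊j/2⌋} k x₂ − c₁ m₁) φ¹(2^{⌊j/2⌋} x₂ − c₂ m₂) for j ∈ ℕ, k ∈ ℤ with |k| ≤ 2^{⌊j/2⌋}, m ∈ ℤ², and the functions ψ̃_{j,k,m}(x₁, x₂) = 2^{3j/4} φ¹(2^{⌊j/2⌋} x₁ − c₂ m₁) ψ¹(2^j x₂ + 2^{⌊j/2⌋} k x₁ − c₁ m₂) for j ∈ ℕ, k ∈ ℤ with |k| ≤ 2^{⌊j/2⌋} − 1, m ∈ ℤ² — is linearly independent as a family in L²(ℝ²) indexed by these parameters. -/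
open MeasureTheory

namespace ShearAux
open Filter Topology

/-- the character `exp (-2 π i x)` -/
noncomputable def ex (x : ℝ) : ℂ := Complex.exp (((-2 * Real.pi * x : ℝ) : ℂ) * Complex.I)

lemma ex_add (x y : ℝ) : ex (x + y) = ex x * ex y := by
  unfold ex
  rw [← Complex.exp_add]
  congr 1
  push_cast
  ring

lemma ex_zero : ex 0 = 1 := by simp [ex]

lemma ex_int (n : ℤ) : ex n = 1 := by
  unfold ex
  rw [Complex.exp_eq_one_iff]
  refine ⟨-n, ?_⟩
  push_cast
  ring

lemma ex_add_int (x : ℝ) (n : ℤ) : ex (x + n) = ex x := by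
  rw [ex_add, ex_int, mul_one]

lemma ex_half : ex (1 / 2) = -1 := by
  unfold ex
  have : (((-2 * Real.pi * (1 / 2) : ℝ) : ℂ) * Complex.I) = -(Real.pi * Complex.I) := by
    push_cast; ring
  rw [this, Complex.exp_neg, Complex.exp_pi_mul_I]
  norm_num

lemma norm_ex (x : ℝ) : ‖ex x‖ = 1 := by
  unfold ex
  exact Complex.norm_exp_ofReal_mul_I _

lemma ex_ne (x : ℝ) : ex x ≠ 0 := Complex.exp_ne_zero _

lemma analytic_ex_mul (c : ℝ) : AnalyticOnNhd ℝ (fun x => ex (c * x)) Set.univ := by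
  intro x _
  unfold ex
  have h1 : AnalyticAt ℝ (fun x : ℝ => ((-2 * Real.pi * (c * x) : ℝ) : ℂ) * Complex.I) x := by
    refine AnalyticAt.mul ?_ analyticAt_const
    have : AnalyticAt ℝ (fun x : ℝ => (-2 * Real.pi * (c * x) : ℝ)) x := by fun_prop
    exact (Complex.ofRealCLM.analyticAt _).comp this
  exact (analyticAt_cexp.restrictScalars (𝕜 := ℝ)).comp_of_eq h1 rfl

lemma continuous_ex : Continuous ex := by
  unfold ex
  fun_prop

/-- the Fourier transform -/
noncomputable def fh (f : ℝ → ℂ) (ξ : ℝ) : ℂ := ∫ x : ℝ, ex (x * ξ) * f x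

lemma fh_eq (f : ℝ → ℂ) : fh f = FourierTransform.fourier f := by
  ext w
  rw [Real.fourier_real_eq_integral_exp_smul]
  unfold fh ex
  congr 1
  ext x
  rw [smul_eq_mul]
  congr 4
  ring

lemma fh_tendsto (f : ℝ → ℂ) : Tendsto (fh f) (cocompact ℝ) (𝓝 0) := by
  rw [fh_eq]
  exact Real.zero_at_infty_fourier f

lemma fh_inj (f : ℝ → ℂ) (hc : Continuous f) (hs : HasCompactSupport f)
    (h : ∀ ξ, fh f ξ = 0) : f = 0 := by
  have h0 : FourierTransform.fourier f = (0 : ℝ → ℂ) := by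
    rw [← fh_eq]; ext ξ; exact h ξ
  have := hc.fourierInv_fourier_eq (hc.integrable_of_hasCompactSupport hs)
    (by rw [h0]; exact integrable_zero _ _ _)
  rw [← this, h0]
  ext x
  simp [Real.fourierInv_eq]

lemma fh_analytic (f : ℝ → ℂ) (hc : Continuous f) (hs : HasCompactSupport f) :
    AnalyticOnNhd ℝ (fh f) Set.univ := by
  have hd : Differentiable ℂ
      (fun z : ℂ => ∫ x : ℝ, Complex.exp ((-2 * Real.pi * x : ℝ) * z * Complex.I) * f x) := by
    intro z₀
    obtain ⟨M, hM⟩ := hs.isCompact.isBounded.exists_norm_le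
    have hM0 : ∀ x, f x ≠ 0 → |x| ≤ M := fun x hx => hM x (subset_tsupport f hx)
    set C : ℝ := 2 * Real.pi * M * Real.exp (2 * Real.pi * M * (‖z₀‖ + 1)) with hC
    have key := hasDerivAt_integral_of_dominated_loc_of_deriv_le (μ := volume)
      (F := fun (z : ℂ) (x : ℝ) => Complex.exp ((-2 * Real.pi * x : ℝ) * z * Complex.I) * f x)
      (F' := fun (z : ℂ) (x : ℝ) =>
        Complex.exp ((-2 * Real.pi * x : ℝ) * z * Complex.I) *
          ((-2 * Real.pi * x : ℝ) * Complex.I) * f x)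
      (x₀ := z₀) (s := Metric.ball z₀ 1) (bound := fun x => C * ‖f x‖)
      (Metric.ball_mem_nhds _ one_pos) ?_ ?_ ?_ ?_ ?_ ?_
    · exact key.2.differentiableAt
    · refine Eventually.of_forall fun z => ?_
      exact (Continuous.aestronglyMeasurable (by fun_prop))
    · exact Continuous.integrable_of_hasCompactSupport (by fun_prop) hs.mul_left
    · exact (Continuous.aestronglyMeasurable (by fun_prop))
    · refine Eventually.of_forall fun x z hz => ?_
      by_cases hx : f x = 0
      · simp [hx]
      have hxM := hM0 x hx
      have hM1 : 0 ≤ M := (abs_nonneg _).trans hxM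
      rw [norm_mul, norm_mul]
      refine mul_le_mul_of_nonneg_right ?_ (norm_nonneg _)
      have hz1 : ‖z‖ ≤ ‖z₀‖ + 1 := by
        have : ‖z - z₀‖ < 1 := by simpa [dist_eq_norm] using hz
        have h2 := norm_add_le (z - z₀) z₀
        simp at h2
        linarith
      have e1 : ‖Complex.exp ((-2 * Real.pi * x : ℝ) * z * Complex.I)‖
          ≤ Real.exp (2 * Real.pi * M * (‖z₀‖ + 1)) := by
        rw [Complex.norm_exp]
        apply Real.exp_le_exp.mpr
        refine (Complex.re_le_norm _).trans ?_
        rw [norm_mul, norm_mul, Complex.norm_I, mul_one, Complex.norm_real, Real.norm_eq_abs,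
          abs_mul, abs_mul, abs_neg, abs_two, abs_of_pos Real.pi_pos]
        gcongr
      have e2 : ‖(((-2 * Real.pi * x : ℝ) : ℂ) * Complex.I)‖ ≤ 2 * Real.pi * M := by
        rw [norm_mul, Complex.norm_I, mul_one, Complex.norm_real, Real.norm_eq_abs,
          abs_mul, abs_mul, abs_neg, abs_two, abs_of_pos Real.pi_pos]
        gcongr
      rw [hC, mul_comm (2 * Real.pi * M)]
      gcongr
    · exact ((hc.integrable_of_hasCompactSupport hs).norm.const_mul C)
    · refine Eventually.of_forall fun x z _ => ?_
      have h1 : HasDerivAt (fun z : ℂ => ((-2 * Real.pi * x : ℝ) : ℂ) * z * Complex.I)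
          (((-2 * Real.pi * x : ℝ) : ℂ) * Complex.I) z := by
        simpa using ((hasDerivAt_id z).const_mul ((-2 * Real.pi * x : ℝ) : ℂ)).mul_const Complex.I
      exact h1.cexp.mul_const (f x)
  intro ξ _
  have h1 := (hd.analyticAt (ξ : ℂ)).restrictScalars (𝕜 := ℝ)
  have h2 := h1.comp_of_eq (Complex.ofRealCLM.analyticAt ξ) rfl
  convert h2 using 1
  ext w
  simp only [fh, ex, Function.comp, Complex.ofRealCLM_apply]
  congr 1
  ext x
  push_cast
  congr 3
  ring

/-- cancellation -/
lemma cancel {f g : ℝ → ℂ} (hf : AnalyticOnNhd ℝ f Set.univ) (hf0 : ∃ x, f x ≠ 0)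
    (hg : Continuous g) (h : ∀ x, f x * g x = 0) : ∀ x, g x = 0 := by
  intro x
  by_contra hx
  have h1 : ∀ᶠ y in 𝓝 x, g y ≠ 0 := hg.continuousAt.eventually_ne hx
  have h2 : f =ᶠ[𝓝 x] 0 := by
    filter_upwards [h1] with y hy
    rcases mul_eq_zero.mp (h y) with h3 | h3
    · exact h3
    · exact absurd h3 hy
  obtain ⟨x₁, hx₁⟩ := hf0
  exact hx₁ (hf.eqOn_zero_of_preconnected_of_eventuallyEq_zero isPreconnected_univ
    (Set.mem_univ x) h2 (Set.mem_univ x₁))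

lemma exists_mul_ne {f g : ℝ → ℂ} (hf : AnalyticOnNhd ℝ f Set.univ) (hf0 : ∃ x, f x ≠ 0)
    (hg : Continuous g) (hg0 : ∃ x, g x ≠ 0) : ∃ x, f x * g x ≠ 0 := by
  by_contra hcon
  push Not at hcon
  obtain ⟨x, hx⟩ := hg0
  exact hx (cancel hf hf0 hg hcon x)

/-- a periodic real-analytic function with infinitely many zeros modulo the period vanishes -/
lemma periodic_zero {f : ℝ → ℂ} (hf : AnalyticOnNhd ℝ f Set.univ) {P : ℝ} (hP : 0 < P)
    (hper : Function.Periodic f P) (z : ℕ → ℝ) (hz : ∀ n, f (z n) = 0)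
    (hinj : ∀ n m : ℕ, ∀ l : ℤ, n ≠ m → z n - z m ≠ P * l) : ∀ x, f x = 0 := by
  set w : ℕ → ℝ := fun n => toIcoMod hP 0 (z n) with hw
  have hw1 : ∀ n, w n = z n - toIcoDiv hP 0 (z n) * P := by
    intro n
    simp only [hw, toIcoMod, zsmul_eq_mul]
  have hwinj : Function.Injective w := by
    intro n m hnm
    by_contra hne
    apply hinj n m (toIcoDiv hP 0 (z n) - toIcoDiv hP 0 (z m)) hne
    rw [hw1, hw1] at hnm
    push_cast
    linarith
  have hw0 : ∀ n, f (w n) = 0 := by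
    intro n
    rw [hw1, hper.sub_int_mul_eq]
    exact hz n
  have hinf : (Set.range w).Infinite := Set.infinite_range_of_injective hwinj
  have hsub : Set.range w ⊆ Set.Icc 0 P := by
    rintro _ ⟨n, rfl⟩
    have := toIcoMod_mem_Ico hP 0 (z n)
    rw [zero_add] at this
    exact ⟨this.1, this.2.le⟩
  obtain ⟨x, _, hx⟩ := hinf.exists_accPt_of_subset_isCompact isCompact_Icc hsub
  have hfr : ∃ᶠ y in 𝓝[≠] x, f y = 0 := by
    rw [accPt_iff_frequently_nhdsNE] at hx
    refine hx.mono ?_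
    rintro _ ⟨n, rfl⟩
    exact hw0 n
  intro y
  exact hf.eqOn_zero_of_preconnected_of_frequently_eq_zero isPreconnected_univ
    (Set.mem_univ x) hfr (Set.mem_univ y)

lemma fh_comp (f : ℝ → ℂ) (a : ℝ) (ha : 0 < a) (b ξ : ℝ) :
    ∫ x : ℝ, ex (x * ξ) * f (a * x - b) = (a⁻¹ : ℝ) * (ex (b * (ξ / a)) * fh f (ξ / a)) := by
  have h1 : ∀ x : ℝ, ex (x * ξ) * f (a * x - b)
      = (fun y => ex (b * (ξ / a)) * (ex ((y - b) * (ξ / a)) * f (y - b))) (a * x) := by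
    intro x
    simp only
    rw [← mul_assoc, ← ex_add]
    congr 2
    field_simp
    ring
  rw [integral_congr_ae (Eventually.of_forall h1)]
  rw [Measure.integral_comp_mul_left
    (fun y => ex (b * (ξ / a)) * (ex ((y - b) * (ξ / a)) * f (y - b)))]
  rw [integral_const_mul, integral_sub_right_eq_self (fun y => ex (y * (ξ / a)) * f y) b]
  rw [abs_of_pos (inv_pos.mpr ha)]
  simp only [fh, Complex.real_smul]

end ShearAux
open MeasureTheory

namespace ShearAux
open Filter Topology

lemma hilbert_expand {H : Type*} [NormedAddCommGroup H] [InnerProductSpace ℂ H]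
    (e : ℤ → H) (c : ℂ) (hc : c ≠ 0) (he : ∀ k l, inner ℂ (e k) (e l) = if k = l then c else 0)
    (v : H) (F₀ : Finset ℤ) (h0 : ∀ k ∉ F₀, inner ℂ (e k) v = 0)
    (happ : ∀ ε : ℝ, 0 < ε → ∃ (F : Finset ℤ) (a : ℤ → ℂ), ‖v - ∑ k ∈ F, a k • e k‖ < ε) :
    v = ∑ k ∈ F₀, (c⁻¹ * inner ℂ (e k) v) • e k := by
  set g := v - ∑ k ∈ F₀, (c⁻¹ * inner ℂ (e k) v) • e k with hg
  have horth : ∀ l, inner ℂ (e l) g = 0 := by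
    intro l
    rw [hg, inner_sub_right, inner_sum]
    simp only [inner_smul_right, he]
    by_cases hl : l ∈ F₀
    · simp only [mul_ite, mul_zero, Finset.sum_ite_eq, hl, if_true]
      field_simp
      ring
    · simp only [mul_ite, mul_zero, Finset.sum_ite_eq, hl, if_false, h0 l hl, sub_zero]
  have horth2 : ∀ (F : Finset ℤ) (a : ℤ → ℂ), inner ℂ g (∑ k ∈ F, a k • e k) = 0 := by
    intro F a
    rw [inner_sum]
    refine Finset.sum_eq_zero fun k _ => ?_
    rw [inner_smul_right, ← inner_conj_symm, horth, map_zero, mul_zero]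
  have hg0 : ‖g‖ = 0 := by
    refine le_antisymm (le_of_forall_pos_le_add fun ε hε => ?_) (norm_nonneg _)
    obtain ⟨F, a, hF⟩ := happ ε hε
    have h1 : inner ℂ g g = inner ℂ g (v - ∑ k ∈ F, a k • e k) := by
      conv_lhs => rw [hg]
      rw [inner_sub_right, inner_sub_right, horth2, ← hg, horth2]
    have h2 : ‖g‖ * ‖g‖ ≤ ‖g‖ * ‖v - ∑ k ∈ F, a k • e k‖ := by
      have := norm_inner_le_norm (𝕜 := ℂ) g (v - ∑ k ∈ F, a k • e k)
      rw [← h1, inner_self_eq_norm_sq_to_K] at this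
      simpa [pow_two] using this
    by_contra hcon
    push Not at hcon
    have hpos : 0 < ‖g‖ := by linarith
    have := le_of_mul_le_mul_left h2 hpos
    linarith
  rw [norm_eq_zero, hg, sub_eq_zero] at hg0
  exact hg0

lemma cs_comp {f : ℝ → ℂ} (hf : HasCompactSupport f) (a : ℝ) (ha : a ≠ 0) (b : ℝ) :
    HasCompactSupport (fun x => f (a * x - b)) := by
  have := hf.comp_homeomorph ((Homeomorph.mulLeft₀ a ha).trans (Homeomorph.subRight b))
  exact this

lemma expand (φ ψ : ℝ → ℂ) (hφc : Continuous φ) (hφs : HasCompactSupport φ)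
    (hφON : ∀ m m' : ℤ,
      (∫ x : ℝ, (starRingEnd ℂ) (φ (x - m)) * φ (x - m')) = if m = m' then 1 else 0)
    (hψc : Continuous ψ) (hψs : HasCompactSupport ψ) (A : ℝ) (hA : 0 < A)
    (happ : ∀ ε : ℝ, 0 < ε → ∃ (F : Finset ℤ) (a : ℤ → ℂ),
        eLpNorm (fun x : ℝ => ψ x - ∑ k ∈ F, a k * φ (A * x - k)) 2 volume
          < ENNReal.ofReal ε) :
    ∃ (F : Finset ℤ) (a : ℤ → ℂ), ∀ x, ψ x = ∑ k ∈ F, a k * φ (A * x - k) := by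
  have hc : ∀ k : ℤ, Continuous (fun x => φ (A * x - k)) := fun k => by fun_prop
  have hcs : ∀ k : ℤ, HasCompactSupport (fun x => φ (A * x - k)) := fun k =>
    cs_comp hφs A hA.ne' k
  have hmem : ∀ k : ℤ, MemLp (fun x => φ (A * x - k)) 2 volume := fun k =>
    (hc k).memLp_of_hasCompactSupport (hcs k)
  have hψm : MemLp ψ 2 volume := hψc.memLp_of_hasCompactSupport hψs
  set e : ℤ → Lp ℂ 2 (volume : Measure ℝ) := fun k => (hmem k).toLp with he
  have hin : ∀ (f g : ℝ → ℂ) (hf : MemLp f 2 volume) (hg : MemLp g 2 volume),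
      inner ℂ (hf.toLp) (hg.toLp) = ∫ x, (starRingEnd ℂ) (f x) * g x := by
    intro f g hf hg
    rw [L2.inner_def]
    refine integral_congr_ae ?_
    filter_upwards [hf.coeFn_toLp, hg.coeFn_toLp] with x h1 h2
    rw [h1, h2]
    simp [RCLike.inner_apply, mul_comm]
  have heo : ∀ k l, inner ℂ (e k) (e l) = if k = l then ((A⁻¹ : ℝ) : ℂ) else 0 := by
    intro k l
    rw [he, hin]
    have := Measure.integral_comp_mul_left
      (fun x => (starRingEnd ℂ) (φ (x - k)) * φ (x - l)) A
    rw [this, hφON, abs_of_pos (inv_pos.mpr hA)]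
    split_ifs <;> simp
  obtain ⟨M₁, hM₁⟩ := hφs.isCompact.isBounded.exists_norm_le
  obtain ⟨M₂, hM₂⟩ := hψs.isCompact.isBounded.exists_norm_le
  set K : ℤ := ⌈A * M₂ + M₁⌉ with hK
  have hzero : ∀ k ∉ Finset.Icc (-K) K, inner ℂ (e k) hψm.toLp = 0 := by
    intro k hk
    rw [he, hin]
    refine integral_eq_zero_of_ae (Eventually.of_forall fun x => ?_)
    by_contra hne
    apply hk
    simp only [Pi.zero_apply, mul_eq_zero, map_eq_zero, not_or] at hne
    have h1 : |A * x - k| ≤ M₁ := hM₁ _ (subset_tsupport φ hne.1)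
    have h2 : |x| ≤ M₂ := hM₂ _ (subset_tsupport ψ hne.2)
    have h3 : |(k : ℝ)| ≤ A * M₂ + M₁ := by
      rw [abs_le] at h1 h2 ⊢
      constructor <;> nlinarith
    have h4 : |(k : ℝ)| ≤ K := h3.trans (Int.le_ceil _)
    rw [abs_le] at h4
    rw [Finset.mem_Icc]
    constructor
    · exact_mod_cast h4.1
    · exact_mod_cast h4.2
  have hsum : ∀ (F : Finset ℤ) (a : ℤ → ℂ),
      MemLp (fun x => ∑ k ∈ F, a k * φ (A * x - k)) 2 volume := fun F a =>
    memLp_finsetSum F fun k _ => (hmem k).const_mul (a k)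
  have hsumL : ∀ (F : Finset ℤ) (a : ℤ → ℂ), (hsum F a).toLp = ∑ k ∈ F, a k • e k := by
    intro F a
    classical
    induction F using Finset.induction_on with
    | empty =>
      simp only [Finset.sum_empty]
      exact MemLp.toLp_zero _
    | insert i s hi ih =>
      rw [Finset.sum_insert hi, ← ih, he, ← MemLp.toLp_const_smul, ← MemLp.toLp_add]
      refine MemLp.toLp_congr _ _ (Eventually.of_forall fun x => ?_)
      simp [Finset.sum_insert hi]
  have := hilbert_expand e ((A⁻¹ : ℝ) : ℂ) (by simpa using hA.ne') heo hψm.toLp _ hzero ?_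
  · refine ⟨Finset.Icc (-K) K, fun k => ((A⁻¹ : ℝ) : ℂ)⁻¹ * inner ℂ (e k) hψm.toLp, ?_⟩
    rw [← hsumL, MemLp.toLp_eq_toLp_iff] at this
    have h2 := (Continuous.ae_eq_iff_eq volume hψc (by fun_prop)).mp this
    exact fun x => congrFun h2 x
  · intro ε hε
    obtain ⟨F, a, h⟩ := happ ε hε
    refine ⟨F, a, ?_⟩
    rw [← hsumL, ← MemLp.toLp_sub, Lp.norm_toLp]
    exact ENNReal.toReal_lt_of_lt_ofReal h

/-- trigonometric polynomials of period one -/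
def TP : Submodule ℂ (ℝ → ℂ) :=
  Submodule.span ℂ (Set.range fun (n : ℤ) => fun x : ℝ => ex (n * x))

lemma TP_ex (n : ℤ) : (fun x : ℝ => ex (n * x)) ∈ TP := Submodule.subset_span ⟨n, rfl⟩

lemma TP_sum (F : Finset ℤ) (a : ℤ → ℂ) : (fun x : ℝ => ∑ k ∈ F, a k * ex (k * x)) ∈ TP := by
  have : (fun x : ℝ => ∑ k ∈ F, a k * ex (k * x)) = ∑ k ∈ F, a k • (fun x : ℝ => ex (k * x)) := by
    ext x; simp
  rw [this]
  exact Submodule.sum_mem _ fun k _ => Submodule.smul_mem _ _ (TP_ex k)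

lemma TP_mul {f g : ℝ → ℂ} (hf : f ∈ TP) (hg : g ∈ TP) : (fun x => f x * g x) ∈ TP := by
  have h := Submodule.mul_mem_mul hf hg
  unfold TP at h
  rw [Submodule.span_mul_span] at h
  refine Submodule.span_mono ?_ h
  rintro _ ⟨_, ⟨n, rfl⟩, _, ⟨m, rfl⟩, rfl⟩
  refine ⟨n + m, ?_⟩
  ext x
  simp only [Pi.mul_apply]
  rw [← ex_add]
  push_cast
  ring_nf

lemma TP_exists {f : ℝ → ℂ} (hf : f ∈ TP) :
    ∃ (F : Finset ℤ) (a : ℤ → ℂ), ∀ x, f x = ∑ k ∈ F, a k * ex (k * x) := by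
  unfold TP at hf
  rw [Finsupp.mem_span_range_iff_exists_finsupp] at hf
  obtain ⟨c, hc⟩ := hf
  refine ⟨c.support, c, fun x => ?_⟩
  rw [← hc, Finsupp.sum, Finset.sum_apply]
  simp

lemma TP_half {f : ℝ → ℂ} (hf : f ∈ TP) : (fun x => f (x + 1 / 2)) ∈ TP := by
  obtain ⟨F, a, h⟩ := TP_exists hf
  have : (fun x => f (x + 1 / 2)) = fun x => ∑ k ∈ F, (a k * ex (k * (1 / 2))) * ex (k * x) := by
    ext x
    rw [h]
    refine Finset.sum_congr rfl fun k _ => ?_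
    rw [mul_add, ex_add]
    ring
  rw [this]
  exact TP_sum F _

lemma TP_double {f : ℝ → ℂ} (hf : f ∈ TP) : (fun x => f (2 * x)) ∈ TP := by
  obtain ⟨F, a, h⟩ := TP_exists hf
  have : (fun x => f (2 * x)) = ∑ k ∈ F, a k • (fun x : ℝ => ex ((2 * k : ℤ) * x)) := by
    ext x
    rw [h]
    simp only [Finset.sum_apply, Pi.smul_apply, smul_eq_mul]
    refine Finset.sum_congr rfl fun k _ => ?_
    push_cast
    ring_nf
  rw [this]
  exact Submodule.sum_mem _ fun k _ => Submodule.smul_mem _ _ (TP_ex _)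

lemma TP_analytic {f : ℝ → ℂ} (hf : f ∈ TP) : AnalyticOnNhd ℝ f Set.univ := by
  obtain ⟨F, a, h⟩ := TP_exists hf
  rw [funext h]
  exact Finset.analyticOnNhd_fun_sum _ fun k _ => analyticOnNhd_const.mul (analytic_ex_mul _)

lemma TP_periodic {f : ℝ → ℂ} (hf : f ∈ TP) : Function.Periodic f 1 := by
  obtain ⟨F, a, h⟩ := TP_exists hf
  intro x
  rw [h, h]
  refine Finset.sum_congr rfl fun k _ => ?_
  rw [mul_add, mul_one, ex_add_int]

lemma TP_desc {f : ℝ → ℂ} (hf : f ∈ TP) (hper : ∀ x, f (x + 1 / 2) = f x) :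
    (fun x => f (x / 2)) ∈ TP := by
  obtain ⟨F, a, h⟩ := TP_exists hf
  have : (fun x => f (x / 2)) = ∑ k ∈ F,
      (if Even k then a k else 0) • (fun x : ℝ => ex ((k / 2 : ℤ) * x)) := by
    ext x
    have h1 : f (x / 2) = (f (x / 2) + f (x / 2 + 1 / 2)) / 2 := by
      rw [hper]; ring
    rw [h1, h, h, ← Finset.sum_add_distrib, Finset.sum_div]
    simp only [Finset.sum_apply, Pi.smul_apply, smul_eq_mul]
    refine Finset.sum_congr rfl fun k _ => ?_
    rw [mul_add, ex_add]
    rcases Int.even_or_odd k with hk | hk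
    · obtain ⟨l, rfl⟩ := hk
      have e1 : ((l + l : ℤ) : ℝ) * (1 / 2) = (l : ℤ) := by push_cast; ring
      have e2 : ((l + l : ℤ) : ℝ) * (x / 2) = l * x := by push_cast; ring
      have e3 : (l + l) / 2 = l := by omega
      rw [e1, ex_int, e2, e3, if_pos ⟨l, rfl⟩]
      ring
    · have hne : ¬ Even k := Int.not_even_iff_odd.mpr hk
      obtain ⟨l, rfl⟩ := hk
      have e1 : ((2 * l + 1 : ℤ) : ℝ) * (1 / 2) = 1 / 2 + (l : ℤ) := by push_cast; ring
      rw [e1, ex_add_int, ex_half, if_neg hne]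
      ring
  rw [this]
  exact Submodule.sum_mem _ fun k _ => Submodule.smul_mem _ _ (TP_ex _)

end ShearAux
open MeasureTheory

namespace ShearAux
open Filter Topology

/-- Fourier-side data: `p`, `q` are the transforms of the scaling function and the wavelet -/
structure Adm (p q A E : ℝ → ℂ) : Prop where
  pan : AnalyticOnNhd ℝ p Set.univ
  qan : AnalyticOnNhd ℝ q Set.univ
  pne : ∃ x, p x ≠ 0
  qne : ∃ x, q x ≠ 0
  ptend : Tendsto p (cocompact ℝ) (𝓝 0)
  hA : A ∈ TP
  hE : E ∈ TP
  relA : ∀ v, q (2 * v) = A v * p v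
  relE : ∀ v, A (2 * v) * p (2 * v) = E v * p v

lemma an_cont {f : ℝ → ℂ} (h : AnalyticOnNhd ℝ f Set.univ) : Continuous f :=
  continuousOn_univ.mp h.continuousOn

lemma an_affine {f : ℝ → ℂ} (h : AnalyticOnNhd ℝ f Set.univ) (a b : ℝ) :
    AnalyticOnNhd ℝ (fun x => f (a * x + b)) Set.univ := by
  intro x _
  have : AnalyticAt ℝ (fun x : ℝ => a * x + b) x := by fun_prop
  exact (h _ (Set.mem_univ _)).comp this

lemma an_mulc {f : ℝ → ℂ} (h : AnalyticOnNhd ℝ f Set.univ) (a : ℝ) :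
    AnalyticOnNhd ℝ (fun x => f (a * x)) Set.univ := by
  simpa using an_affine h a 0

lemma ne_affine {f : ℝ → ℂ} (h : ∃ x, f x ≠ 0) {a : ℝ} (ha : a ≠ 0) (b : ℝ) :
    ∃ x, f (a * x + b) ≠ 0 := by
  obtain ⟨x, hx⟩ := h
  refine ⟨(x - b) / a, ?_⟩
  convert hx using 2
  field_simp
  ring

lemma ne_mulc {f : ℝ → ℂ} (h : ∃ x, f x ≠ 0) {a : ℝ} (ha : a ≠ 0) :
    ∃ x, f (a * x) ≠ 0 := by
  simpa using ne_affine h ha 0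

lemma TP_pow {f : ℝ → ℂ} (hf : f ∈ TP) (n : ℕ) : (fun x => f (2 ^ n * x)) ∈ TP := by
  induction n with
  | zero => simpa using hf
  | succ n ih =>
    have := TP_double ih
    convert this using 3
    ring

lemma TP_cont {f : ℝ → ℂ} (hf : f ∈ TP) : Continuous f := an_cont (TP_analytic hf)

lemma TP_add_int {f : ℝ → ℂ} (hf : f ∈ TP) (x : ℝ) (n : ℤ) : f (x + n) = f x := by
  have := (TP_periodic hf).int_mul n x
  simpa using this

lemma TP_one : (fun _ : ℝ => (1 : ℂ)) ∈ TP := by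
  have := TP_ex 0
  simpa [ex_zero] using this

namespace Adm
variable {p q A E : ℝ → ℂ}

lemma pcont (h : Adm p q A E) : Continuous p := an_cont h.pan
lemma qcont (h : Adm p q A E) : Continuous q := an_cont h.qan

lemma Ane (h : Adm p q A E) : ∃ x, A x ≠ 0 := by
  obtain ⟨x, hx⟩ := h.qne
  refine ⟨x / 2, fun h0 => hx ?_⟩
  have := h.relA (x / 2)
  rw [h0, zero_mul] at this
  rw [← this]
  congr 1
  ring

lemma Ene (h : Adm p q A E) : ∃ x, E x ≠ 0 := by
  by_contra hcon
  push Not at hcon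
  obtain ⟨x, hx⟩ := exists_mul_ne (TP_analytic h.hA) h.Ane h.pcont h.pne
  apply hx
  have := h.relE (x / 2)
  rw [hcon, zero_mul] at this
  rw [← this]
  congr 2 <;> ring

lemma powrel (h : Adm p q A E) (n : ℕ) : ∃ D ∈ TP, ∃ R ∈ TP, (∃ x, D x ≠ 0) ∧ (∃ x, R x ≠ 0) ∧
    ∀ v, p (2 ^ n * v) * D v = R v * p v := by
  induction n with
  | zero => exact ⟨_, TP_one, _, TP_one, ⟨0, one_ne_zero⟩, ⟨0, one_ne_zero⟩, fun v => by simp⟩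
  | succ n ih =>
    obtain ⟨D, hD, R, hR, hD0, hR0, hrel⟩ := ih
    refine ⟨_, TP_mul (TP_pow h.hA (n + 1)) hD, _, TP_mul (TP_pow h.hE n) hR, ?_, ?_, ?_⟩
    · exact exists_mul_ne (TP_analytic (TP_pow h.hA (n + 1))) (ne_mulc h.Ane (by positivity))
        (TP_cont hD) hD0
    · exact exists_mul_ne (TP_analytic (TP_pow h.hE n)) (ne_mulc h.Ene (by positivity))
        (TP_cont hR) hR0
    · intro v
      have h1 := h.relE (2 ^ n * v)
      have h2 := hrel v
      have e : (2 : ℝ) ^ (n + 1) * v = 2 * (2 ^ n * v) := by ring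
      simp only [e]
      linear_combination D v * h1 + E (2 ^ n * v) * h2

lemma shift (h : Adm p q A E) (n : ℕ) (m : ℤ) (x : ℝ) :
    p (2 ^ n * (x + m)) * p x = p (2 ^ n * x) * p (x + m) := by
  obtain ⟨D, hD, R, hR, hD0, hR0, hrel⟩ := h.powrel n
  have hp := h.pcont
  have := cancel (TP_analytic hD) hD0
    (g := fun x => p (2 ^ n * (x + m)) * p x - p (2 ^ n * x) * p (x + m)) (by fun_prop) ?_ x
  · simpa [sub_eq_zero] using this
  · intro x
    have h1 := hrel x
    have h2 := hrel (x + m)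
    rw [TP_add_int hD, TP_add_int hR] at h2
    linear_combination p x * h2 - p (x + m) * h1

lemma clear (h : Adm p q A E) (N : ℕ) : ∃ D ∈ TP, (∃ x, D x ≠ 0) ∧
    ∃ T : ℕ → ℝ → ℂ, (∀ j, T j ∈ TP) ∧ ∀ j ≤ N, ∀ v, D v * p (2 ^ j * v) = T j v * p v := by
  induction N with
  | zero =>
    refine ⟨_, TP_one, ⟨0, one_ne_zero⟩, fun _ _ => 1, fun _ => TP_one, ?_⟩
    intro j hj v
    obtain rfl : j = 0 := by omega
    simp
  | succ N ih =>
    obtain ⟨D, hD, hD0, T, hT, hrel⟩ := ih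
    obtain ⟨D', hD', R, hR, hD0', hR0, hrel'⟩ := h.powrel (N + 1)
    refine ⟨_, TP_mul hD hD', exists_mul_ne (TP_analytic hD) hD0 (TP_cont hD') hD0',
      fun j v => if j ≤ N then T j v * D' v else D v * R v, ?_, ?_⟩
    · intro j
      by_cases hj : j ≤ N
      · simpa [hj] using TP_mul (hT j) hD'
      · simpa [hj] using TP_mul hD hR
    · intro j hj v
      by_cases hj' : j ≤ N
      · simp only [hj', if_true]
        linear_combination D' v * hrel j hj' v
      · obtain rfl : j = N + 1 := by omega
        simp only [hj', if_false]
        linear_combination D v * hrel' v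

lemma clear2 (h : Adm p q A E) (N : ℕ) : ∃ D ∈ TP, (∃ x, D x ≠ 0) ∧
    ∃ T S : ℕ → ℝ → ℂ, (∀ j, T j ∈ TP) ∧ (∀ j, S j ∈ TP) ∧
      (∀ j ≤ N, ∀ v, D v * p (2 ^ j * v) = T j v * p v) ∧
      (∀ j ≤ N, 0 < j → ∀ v, D v * q (2 ^ j * v) = S j v * p v) := by
  obtain ⟨D, hD, hD0, T, hT, hrel⟩ := h.clear N
  refine ⟨D, hD, hD0, T, fun j v => A (2 ^ (j - 1) * v) * T (j - 1) v, hT, ?_, hrel, ?_⟩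
  · intro j
    exact TP_mul (TP_pow h.hA (j - 1)) (hT (j - 1))
  · intro j hj hj0 v
    obtain ⟨i, rfl⟩ : ∃ i, j = i + 1 := ⟨j - 1, by omega⟩
    have e : (2 : ℝ) ^ (i + 1) * v = 2 * (2 ^ i * v) := by ring
    rw [e, h.relA]
    simp only [Nat.add_sub_cancel]
    linear_combination A (2 ^ i * v) * hrel i (by omega) v

/-- wavelets are not in the coarser space, even with odd oversampling -/
lemma key (h : Adm p q A E) (hdet : ∃ w, A w * E (w + 1 / 2) ≠ A (w + 1 / 2) * E w)
    (b : ℕ) (hb : Odd b) (P Q : ℝ → ℂ) (hP : Continuous P) (hQ : Continuous Q)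
    (hPp : Function.Periodic P b) (hQp : Function.Periodic Q b)
    (hrel : ∀ v, P v * q v + Q v * p v = 0) : ∀ v, P v = 0 := by
  have hp := h.pcont
  have hA := TP_cont h.hA
  have hE := TP_cont h.hE
  have h1 : ∀ w, P (2 * w) * A w * A (2 * w) + Q (2 * w) * E w = 0 := by
    refine cancel h.pan h.pne (by fun_prop) fun w => ?_
    have e1 := hrel (2 * w)
    have e2 := h.relA w
    have e3 := h.relE w
    rw [e2] at e1
    linear_combination A (2 * w) * e1 - Q (2 * w) * e3
  obtain ⟨c, rfl⟩ := hb
  have h2 : ∀ w, P (2 * w) * A (w + 1 / 2) * A (2 * w) + Q (2 * w) * E (w + 1 / 2) = 0 := by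
    intro w
    have e1 := h1 (w + 1 / 2 + c)
    have e2 : 2 * (w + 1 / 2 + c) = 2 * w + ((2 * c + 1 : ℕ) : ℝ) := by push_cast; ring
    rw [e2, hPp, hQp] at e1
    have e3 : A (2 * w + ((2 * c + 1 : ℕ) : ℝ)) = A (2 * w) := by
      have := TP_add_int h.hA (2 * w) (2 * c + 1 : ℕ)
      rw [← this]
      push_cast
      rfl
    have e4 := TP_add_int h.hA (w + 1 / 2) c
    have e5 := TP_add_int h.hE (w + 1 / 2) c
    push_cast at e4 e5
    rw [e3, e4, e5] at e1
    exact e1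
  have hdA : AnalyticOnNhd ℝ (fun w => A w * E (w + 1 / 2) - A (w + 1 / 2) * E w) Set.univ :=
    ((TP_analytic h.hA).mul (TP_analytic (TP_half h.hE))).sub
      ((TP_analytic (TP_half h.hA)).mul (TP_analytic h.hE))
  have h3 : ∀ w, A (2 * w) * P (2 * w) = 0 := by
    refine cancel hdA ?_ (by fun_prop) fun w => ?_
    · obtain ⟨w, hw⟩ := hdet
      exact ⟨w, sub_ne_zero.mpr hw⟩
    · linear_combination E (w + 1 / 2) * h1 w - E w * h2 w
  refine cancel (TP_analytic h.hA) h.Ane hP fun v => ?_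
  have := h3 (v / 2)
  rwa [mul_div_cancel₀ v (two_ne_zero)] at this

end Adm

lemma fh_sum {ι : Type*} (S : Finset ι) (c : ι → ℂ) (f : ℝ → ℂ) (hf : Continuous f)
    (hs : HasCompactSupport f) (a b : ι → ℝ) (ha : ∀ i, 0 < a i) (ξ : ℝ) :
    fh (fun x => ∑ i ∈ S, c i * f (a i * x - b i)) ξ =
      ∑ i ∈ S, c i * (((a i)⁻¹ : ℝ) * (ex (b i * (ξ / a i)) * fh f (ξ / a i))) := by
  have e : fh (fun x => ∑ i ∈ S, c i * f (a i * x - b i)) ξ =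
      ∫ x, ∑ i ∈ S, ex (x * ξ) * (c i * f (a i * x - b i)) := by
    simp_rw [← Finset.mul_sum]
    rfl
  rw [e, integral_finsetSum]
  · refine Finset.sum_congr rfl fun i _ => ?_
    rw [← fh_comp f (a i) (ha i) (b i) ξ, ← integral_const_mul]
    congr 1
    ext x
    ring
  · intro i _
    refine Continuous.integrable_of_hasCompactSupport ?_ ?_
    · have := continuous_ex
      fun_prop
    · exact ((cs_comp hs (a i) (ha i).ne' (b i)).mul_left).mul_left

lemma fh_sub (f g : ℝ → ℂ) (hf : Continuous f) (hs : HasCompactSupport f)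
    (hg : Continuous g) (hsg : HasCompactSupport g) (ξ : ℝ) :
    fh (fun x => f x - g x) ξ = fh f ξ - fh g ξ := by
  unfold fh
  have := continuous_ex
  rw [← integral_sub]
  · simp_rw [mul_sub]
  · exact Continuous.integrable_of_hasCompactSupport (by fun_prop) hs.mul_left
  · exact Continuous.integrable_of_hasCompactSupport (by fun_prop) hsg.mul_left

lemma cs_sum {ι : Type*} (S : Finset ι) (f : ι → ℝ → ℂ) (h : ∀ i, HasCompactSupport (f i)) :
    HasCompactSupport (fun x => ∑ i ∈ S, f i x) := by
  classical
  induction S using Finset.induction_on with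
  | empty =>
    simp only [Finset.sum_empty]
    exact HasCompactSupport.zero
  | insert i s hi ih =>
    simp only [Finset.sum_insert hi]
    exact (h i).add ih

lemma orth_zero (ψ : ℝ → ℂ) (hψc : Continuous ψ) (hψcs : HasCompactSupport ψ)
    (hψorth : ∀ (j j' : ℕ) (l l' : ℤ), (j, l) ≠ (j', l') →
      (∫ x : ℝ, (starRingEnd ℂ) (ψ ((2 : ℝ) ^ j * x - l)) * ψ ((2 : ℝ) ^ j' * x - l')) = 0)
    (F G : Finset ℤ) (a b : ℤ → ℂ)
    (h : ∀ x, ∑ k ∈ F, a k * ψ (1 * x - k) = ∑ k ∈ G, b k * ψ (2 * x - k)) :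
    ∀ x, ∑ k ∈ F, a k * ψ (1 * x - k) = 0 := by
  set f : ℝ → ℂ := fun x => ∑ k ∈ F, a k * ψ (1 * x - k) with hf
  have hfc : Continuous f := by fun_prop
  have hfs : HasCompactSupport f := cs_sum _ _ fun k =>
    (cs_comp hψcs 1 one_ne_zero k).mul_left
  have h0 : ∫ x, (starRingEnd ℂ) (f x) * f x = 0 := by
    have e : ∀ x, (starRingEnd ℂ) (f x) * f x = ∑ k ∈ F, ∑ l ∈ G,
        ((starRingEnd ℂ) (a k) * b l) *
          ((starRingEnd ℂ) (ψ (2 ^ 0 * x - k)) * ψ (2 ^ 1 * x - l)) := by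
      intro x
      conv_lhs => rw [show f x = ∑ k ∈ G, b k * ψ (2 * x - k) from h x]
      rw [← h x, map_sum, h x, Finset.sum_mul_sum]
      refine Finset.sum_congr rfl fun k _ => Finset.sum_congr rfl fun l _ => ?_
      simp only [map_mul, pow_zero, pow_one]
      ring
    have hIntg : ∀ k l : ℤ, Integrable (fun x : ℝ => ((starRingEnd ℂ) (a k) * b l) *
          ((starRingEnd ℂ) (ψ (2 ^ 0 * x - k)) * ψ (2 ^ 1 * x - l))) volume := by
      intro k l
      refine Continuous.integrable_of_hasCompactSupport ?_ ?_
      · have := Complex.continuous_conj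
        fun_prop
      · exact ((cs_comp hψcs (2 ^ 1) (by norm_num) l).mul_left).mul_left
    simp_rw [e]
    rw [integral_finsetSum _ fun k _ => integrable_finsetSum _ fun l _ => hIntg k l]
    refine Finset.sum_eq_zero fun k _ => ?_
    rw [integral_finsetSum _ fun l _ => hIntg k l]
    refine Finset.sum_eq_zero fun l _ => ?_
    rw [integral_const_mul, hψorth 0 1 k l (by simp), mul_zero]
  have h1 : ∫ x, ‖f x‖ ^ 2 = 0 := by
    have e : ∀ x, (starRingEnd ℂ) (f x) * f x = ((‖f x‖ ^ 2 : ℝ) : ℂ) := by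
      intro x
      rw [Complex.conj_mul']
      push_cast
      rfl
    simp_rw [e] at h0
    rw [integral_complex_ofReal] at h0
    exact_mod_cast h0
  have h2 : (fun x => ‖f x‖ ^ 2) = 0 := by
    have hc : Continuous (fun x => ‖f x‖ ^ 2) := by fun_prop
    refine (Continuous.ae_eq_iff_eq volume hc continuous_zero).mp ?_
    refine (integral_eq_zero_iff_of_nonneg (fun x => by positivity) ?_).mp h1
    refine hc.integrable_of_hasCompactSupport ?_
    exact hfs.comp_left (g := fun z : ℂ => ‖z‖ ^ 2) (by simp)
  intro x
  have h3 : ‖f x‖ ^ 2 = 0 := congrFun h2 x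
  exact norm_eq_zero.mp (pow_eq_zero_iff two_ne_zero |>.mp h3)

lemma det_ne {ψ p A E : ℝ → ℂ} (hψc : Continuous ψ) (hψcs : HasCompactSupport ψ)
    (hψorth : ∀ (j j' : ℕ) (l l' : ℤ), (j, l) ≠ (j', l') →
      (∫ x : ℝ, (starRingEnd ℂ) (ψ ((2 : ℝ) ^ j * x - l)) * ψ ((2 : ℝ) ^ j' * x - l')) = 0)
    (h : Adm p (fh ψ) A E) : ∃ w, A w * E (w + 1 / 2) ≠ A (w + 1 / 2) * E w := by
  by_contra hcon
  push Not at hcon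
  have hE1 : ∀ w, E (w + 1 / 2 + 1 / 2) = E w := fun w => by
    rw [add_assoc, add_halves]; exact TP_periodic h.hE w
  have hQ : (fun w => E w * E (w + 1 / 2)) ∈ TP := TP_mul h.hE (TP_half h.hE)
  have hU : (fun w => A w * E (w + 1 / 2) * A (2 * w)) ∈ TP :=
    TP_mul (TP_mul h.hA (TP_half h.hE)) (TP_double h.hA)
  have he := TP_desc hQ (fun w => by simp only [hE1]; ring)
  have hu := TP_desc hU (fun w => by
    simp only [hE1]
    rw [show 2 * (w + 1 / 2) = 2 * w + 1 by ring, TP_periodic h.hA, hcon w])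
  set e : ℝ → ℂ := fun x => E (x / 2) * E (x / 2 + 1 / 2) with he_def
  set u : ℝ → ℂ := fun x => A (x / 2) * E (x / 2 + 1 / 2) * A (2 * (x / 2)) with hu_def
  have hrel : ∀ x, e x * fh ψ x = u x * p x := by
    intro x
    have h1 := h.relA (x / 2)
    have h2 := h.relE (x / 2)
    simp only [he_def, hu_def]
    rw [mul_div_cancel₀ x two_ne_zero] at *
    linear_combination E (x / 2) * E (x / 2 + 1 / 2) * h1 - A (x / 2) * E (x / 2 + 1 / 2) * h2
  have hene : ∃ x, e x ≠ 0 := by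
    obtain ⟨x, hx⟩ := exists_mul_ne (TP_analytic h.hE) h.Ene (TP_cont (TP_half h.hE))
      (by simpa using ne_affine h.Ene one_ne_zero (1 / 2))
    refine ⟨2 * x, ?_⟩
    simp only [he_def]
    rwa [mul_div_cancel_left₀ x two_ne_zero]
  have hune : ∃ x, u x ≠ 0 := by
    by_contra hc
    push Not at hc
    obtain ⟨x, hx⟩ := exists_mul_ne (TP_analytic he) hene h.qcont h.qne
    apply hx
    rw [hrel, hc, zero_mul]
  have hQ2 : (fun w => u w * u (w + 1 / 2)) ∈ TP := TP_mul hu (TP_half hu)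
  have hu1 : ∀ w, u (w + 1 / 2 + 1 / 2) = u w := fun w => by
    rw [add_assoc, add_halves]; exact TP_periodic hu w
  have hQ3 := TP_desc hQ2 (fun w => by simp only [hu1]; ring)
  have hg : (fun w => e w * A w * u (w + 1 / 2)) ∈ TP := TP_mul (TP_mul he h.hA) (TP_half hu)
  obtain ⟨F, a, ha⟩ := TP_exists hQ3
  obtain ⟨G, b, hb⟩ := TP_exists hg
  have hmain : ∀ x, (u (x / 2) * u (x / 2 + 1 / 2)) * fh ψ x
      = (e (x / 2) * A (x / 2) * u (x / 2 + 1 / 2)) * fh ψ (x / 2) := by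
    intro x
    have h1 := hrel (x / 2)
    have h2 := h.relA (x / 2)
    rw [mul_div_cancel₀ x two_ne_zero] at h2
    linear_combination u (x / 2) * u (x / 2 + 1 / 2) * h2 - A (x / 2) * u (x / 2 + 1 / 2) * h1
  have hc1 : HasCompactSupport (fun x => ∑ k ∈ F, a k * ψ (1 * x - k)) :=
    cs_sum _ _ fun k => (cs_comp hψcs 1 one_ne_zero k).mul_left
  have hc2 : HasCompactSupport (fun x => ∑ k ∈ G, (2 * b k) * ψ (2 * x - k)) :=
    cs_sum _ _ fun k => (cs_comp hψcs 2 two_ne_zero k).mul_left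
  have hphys := fh_inj (fun x => (∑ k ∈ F, a k * ψ (1 * x - k)) -
      (∑ k ∈ G, (2 * b k) * ψ (2 * x - k))) (by fun_prop)
      (hc1.sub hc2) (fun ξ => by
        rw [fh_sub _ _ (by fun_prop) hc1 (by fun_prop) hc2,
          fh_sum F a ψ hψc hψcs (fun _ => 1) (fun k => (k : ℝ)) (fun _ => one_pos),
          fh_sum G (fun k => 2 * b k) ψ hψc hψcs (fun _ => 2) (fun k => (k : ℝ))
            (fun _ => two_pos)]
        have h1 := hmain ξ
        rw [ha, hb, Finset.sum_mul, Finset.sum_mul] at h1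
        rw [sub_eq_zero]
        convert h1 using 1
        · refine Finset.sum_congr rfl fun k _ => ?_
          simp only [div_one, inv_one]
          push_cast
          ring
        · refine Finset.sum_congr rfl fun k _ => ?_
          push_cast
          ring)
  have hz := orth_zero ψ hψc hψcs hψorth F G a (fun k => 2 * b k)
    (fun x => by have := congrFun hphys x; simpa [sub_eq_zero] using this)
  have hfz : ∀ ξ, (u (ξ / 2) * u (ξ / 2 + 1 / 2)) * fh ψ ξ = 0 := by
    intro ξ
    have h1 := fh_sum F a ψ hψc hψcs (fun _ => 1) (fun k => (k : ℝ)) (fun _ => one_pos) ξ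
    rw [funext hz] at h1
    rw [ha, Finset.sum_mul]
    have h2 : fh (fun _ => (0 : ℂ)) ξ = 0 := by simp [fh]
    rw [h2] at h1
    rw [h1]
    refine Finset.sum_congr rfl fun k _ => ?_
    simp only [div_one, inv_one]
    push_cast
    ring
  obtain ⟨x, hx⟩ := exists_mul_ne (TP_analytic hu) hune (TP_cont (TP_half hu))
      (by simpa using ne_affine hune one_ne_zero (1 / 2))
  have hall := cancel h.qan h.qne (TP_cont hQ3) (fun ξ => by rw [mul_comm]; exact hfz ξ) (2 * x)
  rw [mul_div_cancel_left₀ x two_ne_zero] at hall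
  exact hx hall

end ShearAux
open MeasureTheory

namespace ShearAux
open Filter Topology

/-- bounded functions -/
def Bd (g : ℝ → ℂ) : Prop := ∃ C, ∀ x, ‖g x‖ ≤ C

lemma TP_bd {f : ℝ → ℂ} (hf : f ∈ TP) : Bd f := by
  obtain ⟨F, a, h⟩ := TP_exists hf
  refine ⟨∑ k ∈ F, ‖a k‖, fun x => ?_⟩
  rw [h]
  refine (norm_sum_le _ _).trans (Finset.sum_le_sum fun k _ => ?_)
  rw [norm_mul, norm_ex, mul_one]

lemma Bd.mul {f g : ℝ → ℂ} (hf : Bd f) (hg : Bd g) : Bd (fun x => f x * g x) := by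
  obtain ⟨C, hC⟩ := hf
  obtain ⟨C', hC'⟩ := hg
  refine ⟨C * C', fun x => ?_⟩
  rw [norm_mul]
  exact mul_le_mul (hC x) (hC' x) (norm_nonneg _) ((norm_nonneg _).trans (hC x))

lemma Bd.tend {f : ℝ → ℂ} (hf : Bd f) (x : ℕ → ℝ) {z : ℕ → ℂ} (hz : Tendsto z atTop (𝓝 0)) :
    Tendsto (fun n => f (x n) * z n) atTop (𝓝 0) := by
  obtain ⟨C, hC⟩ := hf
  have h1 : Tendsto (fun n => C * ‖z n‖) atTop (𝓝 0) := by
    simpa using (tendsto_const_nhds (x := C)).mul hz.norm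
  refine squeeze_zero_norm (fun n => ?_) h1
  rw [norm_mul]
  exact mul_le_mul_of_nonneg_right (hC _) (norm_nonneg _)

lemma tend_cocompact (A B : ℝ) (hA : A ≠ 0) :
    Tendsto (fun n : ℕ => 2 ^ n * A + B) atTop (cocompact ℝ) := by
  have h2 : Tendsto (fun n : ℕ => (2 : ℝ) ^ n) atTop atTop :=
    tendsto_pow_atTop_atTop_of_one_lt one_lt_two
  rcases lt_or_gt_of_ne hA with h | h
  · refine Tendsto.mono_right ?_ atBot_le_cocompact
    exact tendsto_atBot_add_const_right _ _ (h2.atTop_mul_const_of_neg h)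
  · refine Tendsto.mono_right ?_ atTop_le_cocompact
    exact tendsto_atTop_add_const_right _ _ (h2.atTop_mul_const h)

lemma asym1 {p q A E : ℝ → ℂ} (h : Adm p q A E) {D : ℝ → ℂ} (hD : D ∈ TP) (hD0 : ∃ x, D x ≠ 0)
    {ι κ : Type*} (F : Finset ι) (K : Finset κ) (g V : ι → ℝ → ℂ) (g' V' : κ → ℝ → ℂ)
    (σ : ι → ℝ) (σ' : κ → ℝ)
    (hg : ∀ r, Continuous (g r)) (hg' : ∀ r, Continuous (g' r))
    (hV : ∀ r, Continuous (V r)) (hV' : ∀ r, Continuous (V' r))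
    (hgb : ∀ r, Bd (g r)) (hgb' : ∀ r, Bd (g' r))
    (hVt : ∀ r, Tendsto (V r) (cocompact ℝ) (𝓝 0))
    (hVt' : ∀ r, Tendsto (V' r) (cocompact ℝ) (𝓝 0))
    (b : ℕ) (hb : 0 < b) (hper : ∀ r ∈ F, Function.Periodic (g r) b)
    (hrel : ∀ v w, p v * D w * (∑ r ∈ F, g r v * V r (w - σ r * v)) +
      p w * D v * (∑ r ∈ K, g' r w * V' r (v - σ' r * w)) = 0)
    (σ₀ : ℝ) (hσ₀ : σ₀ ≠ 0) (hσσ : ∀ r ∈ K, σ₀ * σ' r ≠ 1)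
    (f : ℕ) (m : ℤ) (y : ℝ) (hy : y ≠ 0) (hpy : p y ≠ 0) (hm : y * (2 ^ f * σ₀ - 1) = m)
    (hκ : 2 ^ f * σ₀ ≠ 1) :
    ∃ z : ℝ, ∀ t, ∑ r ∈ F with σ r = σ₀, g r (z + 2 ^ f / (1 - 2 ^ f * σ₀) * t) * V r t = 0 := by
  classical
  obtain ⟨Df, hDf, Ef, hEf, -, hEf0, hfrel⟩ := h.powrel f
  have hpc := h.pcont
  have hDc := TP_cont hD
  have hDfc := TP_cont hDf
  have hEfc := TP_cont hEf
  have hf2 : (2 : ℝ) ^ f ≠ 0 := by positivity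
  -- the exact relation along the orbit
  have star : ∀ (n : ℕ) (x : ℝ),
      Ef (2 ^ n * x) * p x * D (2 ^ n * x) *
        (∑ r ∈ F, g r (2 ^ f * (2 ^ n * x)) * V r (2 ^ n * (x + m) - σ r * (2 ^ f * (2 ^ n * x))))
      + p (x + m) * Df (2 ^ n * x) * D (2 ^ f * (2 ^ n * x)) *
        (∑ r ∈ K, g' r (2 ^ n * (x + m)) * V' r (2 ^ f * (2 ^ n * x) - σ' r * (2 ^ n * (x + m))))
      = 0 := by
    intro n
    refine cancel (an_mulc h.pan (2 ^ n)) (ne_mulc h.pne (by positivity)) (by fun_prop) fun x => ?_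
    have h1 := hrel (2 ^ f * (2 ^ n * x)) (2 ^ n * (x + m))
    have h2 := hfrel (2 ^ n * x)
    have h3 := h.shift n m x
    have h4 : D (2 ^ n * (x + m)) = D (2 ^ n * x) := by
      have := TP_add_int hD (2 ^ n * x) (2 ^ n * m)
      rw [← this]
      congr 1
      push_cast
      ring
    rw [h4] at h1
    set X := ∑ r ∈ F, g r (2 ^ f * (2 ^ n * x)) *
      V r (2 ^ n * (x + m) - σ r * (2 ^ f * (2 ^ n * x)))
    set Y := ∑ r ∈ K, g' r (2 ^ n * (x + m)) *
      V' r (2 ^ f * (2 ^ n * x) - σ' r * (2 ^ n * (x + m)))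
    linear_combination p x * Df (2 ^ n * x) * h1 - p x * D (2 ^ n * x) * X * h2
      - Df (2 ^ n * x) * D (2 ^ f * (2 ^ n * x)) * Y * h3
  set R : ℝ → ℝ → ℂ := fun v t => ∑ r ∈ F with σ r = σ₀, g r v * V r t with hR
  set τ : ℝ → ℝ := fun u => (1 - 2 ^ f * σ₀) * u with hτ
  set G : ℝ → ℝ → ℂ := fun u w => Ef (w + u) * (D (w + u) * R (2 ^ f * (w + u)) (τ u)) with hG
  have hGc : ∀ u, Continuous (G u) := by
    intro u
    simp only [hG, hR]
    fun_prop
  have hy2 : ∀ n : ℕ, (2 : ℝ) ^ n ≠ 0 := fun n => by positivity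
  have hlim : ∀ u, Tendsto (fun n : ℕ => G u (2 ^ n * y)) atTop (𝓝 0) := by
    intro u
    have hyn : Tendsto (fun n : ℕ => y + u / 2 ^ n) atTop (𝓝 y) := by
      have h1 : Tendsto (fun n : ℕ => u * (1 / 2 : ℝ) ^ n) atTop (𝓝 (u * 0)) :=
        (tendsto_pow_atTop_nhds_zero_of_lt_one (by norm_num) (by norm_num)).const_mul u
      have h2 := (tendsto_const_nhds (x := y)).add h1
      simp only [mul_zero, add_zero] at h2
      refine h2.congr fun n => ?_
      rw [one_div, inv_pow, div_eq_mul_inv]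
    have hpn : Tendsto (fun n : ℕ => p (y + u / 2 ^ n)) atTop (𝓝 (p y)) :=
      (hpc.tendsto y).comp hyn
    have hpn' : Tendsto (fun n : ℕ => p (y + u / 2 ^ n + m)) atTop (𝓝 (p (y + m))) :=
      ((hpc.comp (continuous_add_const (m : ℝ))).tendsto y).comp hyn
    -- the remaining terms of the first sum
    have hrest : Tendsto (fun n : ℕ => ∑ r ∈ F with ¬ σ r = σ₀,
        g r (2 ^ f * (2 ^ n * (y + u / 2 ^ n))) * V r (2 ^ n * (y + u / 2 ^ n + m) -
          σ r * (2 ^ f * (2 ^ n * (y + u / 2 ^ n))))) atTop (𝓝 0) := by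
      have e0 : (0 : ℂ) = ∑ r ∈ F with ¬ σ r = σ₀, (0 : ℂ) := Finset.sum_const_zero.symm
      conv => arg 3; rw [e0]
      refine tendsto_finsetSum _ fun r hr => ?_
      have hr' := (Finset.mem_filter.mp hr).2
      refine (hgb r).tend _ ((hVt r).comp ?_)
      have := tend_cocompact (2 ^ f * (σ₀ - σ r) * y) (u - σ r * 2 ^ f * u)
        (mul_ne_zero (mul_ne_zero hf2 (sub_ne_zero.mpr (Ne.symm hr'))) hy)
      refine this.congr fun n => ?_
      have := hy2 n
      rw [← hm]
      field_simp
      ring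
    have hY : Tendsto (fun n : ℕ => ∑ r ∈ K, g' r (2 ^ n * (y + u / 2 ^ n + m)) *
        V' r (2 ^ f * (2 ^ n * (y + u / 2 ^ n)) - σ' r * (2 ^ n * (y + u / 2 ^ n + m))))
        atTop (𝓝 0) := by
      have e0 : (0 : ℂ) = ∑ r ∈ K, (0 : ℂ) := Finset.sum_const_zero.symm
      conv => arg 3; rw [e0]
      refine tendsto_finsetSum _ fun r hr => ?_
      refine (hgb' r).tend _ ((hVt' r).comp ?_)
      have h1 : 1 - σ₀ * σ' r ≠ 0 := sub_ne_zero.mpr (Ne.symm (hσσ r hr))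
      have := tend_cocompact (2 ^ f * (1 - σ₀ * σ' r) * y) (2 ^ f * u - σ' r * u)
        (mul_ne_zero (mul_ne_zero hf2 h1) hy)
      refine this.congr fun n => ?_
      have := hy2 n
      rw [← hm]
      field_simp
      ring
    have hsum : Tendsto (fun n : ℕ => p (y + u / 2 ^ n) * G u (2 ^ n * y)) atTop (𝓝 0) := by
      have e1 := (((TP_bd hEf).mul (TP_bd hD)).tend (fun n => 2 ^ n * (y + u / 2 ^ n))
        (by simpa using hpn.mul hrest))
      have e2 := ((TP_bd hDf).mul (TP_bd (TP_pow hD f))).tend (fun n => 2 ^ n * (y + u / 2 ^ n))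
        (by simpa using hpn'.mul hY)
      have e3 := (e1.add e2).neg
      simp only [add_zero, neg_zero] at e3
      refine e3.congr fun n => ?_
      have s1 := star n (y + u / 2 ^ n)
      rw [← Finset.sum_filter_add_sum_filter_not F (fun r => σ r = σ₀)] at s1
      have s2 : (∑ r ∈ F with σ r = σ₀, g r (2 ^ f * (2 ^ n * (y + u / 2 ^ n))) *
          V r (2 ^ n * (y + u / 2 ^ n + m) - σ r * (2 ^ f * (2 ^ n * (y + u / 2 ^ n)))))
          = R (2 ^ f * (2 ^ n * (y + u / 2 ^ n))) (τ u) := by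
        refine Finset.sum_congr rfl fun r hr => ?_
        rw [(Finset.mem_filter.mp hr).2]
        congr 2
        have := hy2 n
        rw [← hm, hτ]
        field_simp
        ring
      rw [s2] at s1
      have s3 : (2 : ℝ) ^ n * y + u = 2 ^ n * (y + u / 2 ^ n) := by
        have := hy2 n
        field_simp
      simp only [hG, s3]
      linear_combination -s1
    have h5 := hsum.mul (hpn.inv₀ hpy)
    rw [zero_mul] at h5
    refine h5.congr' ?_
    filter_upwards [hpn.eventually_ne hpy] with n hn
    rw [mul_comm, inv_mul_cancel_left₀ hn]
  -- periodicity and compactness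
  have hb' : (0 : ℝ) < b := by exact_mod_cast hb
  have hGper : ∀ u w (l : ℤ), G u (w + l * b) = G u w := by
    intro u w l
    have e1 : w + l * b + u = w + u + ((l * b : ℤ) : ℝ) := by push_cast; ring
    have e2 : ∀ t, R (2 ^ f * (w + u + ((l * b : ℤ) : ℝ))) t = R (2 ^ f * (w + u)) t := by
      intro t
      refine Finset.sum_congr rfl fun r hr => ?_
      have := (hper r (Finset.mem_filter.mp hr).1).int_mul (2 ^ f * l) (2 ^ f * (w + u))
      rw [← this]
      congr 2
      push_cast
      ring
    simp only [hG, e1, TP_add_int hEf, TP_add_int hD, e2]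
  obtain ⟨w, -, θ, hθ, hw⟩ := isCompact_Icc.tendsto_subseq
    (x := fun n : ℕ => (b : ℝ) * Int.fract (2 ^ n * y / b)) (s := Set.Icc (0 : ℝ) b) (fun n =>
      ⟨mul_nonneg hb'.le (Int.fract_nonneg _), by
        have := (Int.fract_lt_one ((2 : ℝ) ^ n * y / b)).le
        nlinarith⟩)
  have hGw : ∀ u, G u w = 0 := by
    intro u
    have h1 := ((hGc u).tendsto w).comp hw
    have h2 := (hlim u).comp hθ.tendsto_atTop
    refine tendsto_nhds_unique h1 (h2.congr fun n => ?_)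
    simp only [Function.comp]
    rw [← hGper u (b * Int.fract (2 ^ θ n * y / b)) ⌊2 ^ θ n * y / b⌋]
    congr 1
    have := Int.self_sub_floor ((2 : ℝ) ^ θ n * y / b)
    rw [← this]
    field_simp
    ring
  have hRw : ∀ u, R (2 ^ f * (w + u)) (τ u) = 0 := by
    have c1 : ∀ u, D (w + u) * R (2 ^ f * (w + u)) (τ u) = 0 := by
      refine cancel (f := fun u => Ef (w + u)) ?_ ?_ ?_ fun u => hGw u
      · simpa [add_comm] using an_affine (TP_analytic hEf) 1 w
      · simpa [add_comm] using ne_affine hEf0 one_ne_zero w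
      · simp only [hR, hτ]
        fun_prop
    refine cancel (f := fun u => D (w + u)) ?_ ?_ ?_ fun u => c1 u
    · simpa [add_comm] using an_affine (TP_analytic hD) 1 w
    · simpa [add_comm] using ne_affine hD0 one_ne_zero w
    · simp only [hR, hτ]
      fun_prop
  refine ⟨2 ^ f * w, fun t => ?_⟩
  have hk : 1 - 2 ^ f * σ₀ ≠ 0 := sub_ne_zero.mpr (Ne.symm hκ)
  have := hRw (t / (1 - 2 ^ f * σ₀))
  simp only [hR, hτ] at this
  rw [mul_div_cancel₀ t hk] at this
  rw [← this]
  refine Finset.sum_congr rfl fun r _ => ?_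
  congr 2
  field_simp

end ShearAux
open MeasureTheory

namespace ShearAux
open Filter Topology

lemma choose_y {p : ℝ → ℂ} (hp : Continuous p) (han : AnalyticOnNhd ℝ p Set.univ)
    (h0 : ∃ x, p x ≠ 0) (σ₀ : ℝ) (hσ₀ : σ₀ ≠ 0) :
    ∃ f₀ : ℕ, ∀ f ≥ f₀, 2 ^ f * σ₀ ≠ 1 ∧ ∃ (m : ℤ) (y : ℝ), y ≠ 0 ∧ p y ≠ 0 ∧
      y * (2 ^ f * σ₀ - 1) = m := by
  -- a point where `x * p x ≠ 0`
  have hx : ∃ x, p x * (x : ℂ) ≠ 0 :=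
    exists_mul_ne han h0 Complex.continuous_ofReal ⟨1, by simp⟩
  obtain ⟨x, hx⟩ := hx
  have hev : ∀ᶠ y in 𝓝 x, p y * (y : ℂ) ≠ 0 :=
    (hp.mul Complex.continuous_ofReal).continuousAt.eventually_ne hx
  obtain ⟨ε, hε, hball⟩ := Metric.eventually_nhds_iff.mp hev
  have h2 : Tendsto (fun n : ℕ => |σ₀| * (2 : ℝ) ^ n) atTop atTop :=
    (tendsto_pow_atTop_atTop_of_one_lt one_lt_two).const_mul_atTop (abs_pos.mpr hσ₀)
  obtain ⟨f₀, hf₀⟩ := eventually_atTop.mp (h2.eventually_gt_atTop (1 + 1 / ε))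
  refine ⟨f₀, fun f hf => ?_⟩
  have h3 := hf₀ f hf
  have h4 : |(2 : ℝ) ^ f * σ₀| = |σ₀| * 2 ^ f := by
    rw [abs_mul, abs_of_pos (by positivity : (0 : ℝ) < 2 ^ f), mul_comm]
  set L := (2 : ℝ) ^ f * σ₀ with hL
  have h5 : 1 / ε < |L - 1| := by
    have := abs_sub_abs_le_abs_sub L 1
    rw [abs_one] at this
    rw [h4] at this
    linarith
  have hpos : 0 < 1 / ε := by positivity
  have hL1 : L - 1 ≠ 0 := by
    intro h
    rw [h, abs_zero] at h5
    linarith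
  refine ⟨fun h => hL1 (by rw [h]; ring), round (x * (L - 1)), round (x * (L - 1)) / (L - 1), ?_⟩
  have h6 := abs_sub_round (x * (L - 1))
  have hd : dist ((round (x * (L - 1)) : ℝ) / (L - 1)) x < ε := by
    rw [Real.dist_eq]
    have e : (round (x * (L - 1)) : ℝ) / (L - 1) - x =
      -((x * (L - 1) - round (x * (L - 1))) / (L - 1)) := by
      field_simp
      ring
    rw [e, abs_neg, abs_div, div_lt_iff₀ (abs_pos.mpr hL1)]
    have : 1 < ε * |L - 1| := by
      rw [div_lt_iff₀ hε] at h5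
      linarith
    linarith
  have h7 := hball hd
  refine ⟨?_, left_ne_zero_of_mul h7, div_mul_cancel₀ _ hL1⟩
  intro h8
  rw [h8] at h7
  simp at h7

lemma asym {p q A E : ℝ → ℂ} (h : Adm p q A E) {D : ℝ → ℂ} (hD : D ∈ TP) (hD0 : ∃ x, D x ≠ 0)
    {ι κ : Type*} (F : Finset ι) (K : Finset κ) (g V : ι → ℝ → ℂ) (g' V' : κ → ℝ → ℂ)
    (σ : ι → ℝ) (σ' : κ → ℝ)
    (hg : ∀ r, AnalyticOnNhd ℝ (g r) Set.univ) (hg' : ∀ r, Continuous (g' r))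
    (hV : ∀ r, Continuous (V r)) (hV' : ∀ r, Continuous (V' r))
    (hgb : ∀ r, Bd (g r)) (hgb' : ∀ r, Bd (g' r))
    (hVt : ∀ r, Tendsto (V r) (cocompact ℝ) (𝓝 0))
    (hVt' : ∀ r, Tendsto (V' r) (cocompact ℝ) (𝓝 0))
    (b : ℕ) (hb : 0 < b) (hper : ∀ r ∈ F, Function.Periodic (g r) b)
    (hrel : ∀ v w, p v * D w * (∑ r ∈ F, g r v * V r (w - σ r * v)) +
      p w * D v * (∑ r ∈ K, g' r w * V' r (v - σ' r * w)) = 0)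
    (σ₀ : ℝ) (hσ₀ : σ₀ ≠ 0) (hσσ : ∀ r ∈ K, σ₀ * σ' r ≠ 1) :
    ∀ v t, ∑ r ∈ F with σ r = σ₀, g r v * V r t = 0 := by
  obtain ⟨f₀, hf₀⟩ := choose_y h.pcont h.pan h.pne σ₀ hσ₀
  have hz : ∀ n : ℕ, ∃ z : ℝ, ∀ t, ∑ r ∈ F with σ r = σ₀,
      g r (z + 2 ^ (f₀ + n) / (1 - 2 ^ (f₀ + n) * σ₀) * t) * V r t = 0 := by
    intro n
    obtain ⟨hκ, m, y, hy, hpy, hm⟩ := hf₀ (f₀ + n) (by omega)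
    exact asym1 h hD hD0 F K g V g' V' σ σ' (fun r => an_cont (hg r)) hg' hV hV' hgb hgb' hVt hVt'
      b hb hper hrel σ₀ hσ₀ hσσ _ m y hy hpy hm hκ
  choose z hz using hz
  set k : ℕ → ℝ := fun n => 2 ^ (f₀ + n) / (1 - 2 ^ (f₀ + n) * σ₀) with hk
  have hkne : ∀ n, 1 - 2 ^ (f₀ + n) * σ₀ ≠ 0 := fun n =>
    sub_ne_zero.mpr (Ne.symm (hf₀ (f₀ + n) (by omega)).1)
  have hkinj : ∀ n m, n ≠ m → k n - k m ≠ 0 := by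
    intro n m hnm h0
    apply hnm
    have h1 : k n = k m := sub_eq_zero.mp h0
    simp only [hk] at h1
    rw [div_eq_div_iff (hkne n) (hkne m)] at h1
    have h2 : (2 : ℝ) ^ (f₀ + n) = 2 ^ (f₀ + m) := by linarith
    have h3 := pow_right_injective₀ (two_pos : (0 : ℝ) < 2) (by norm_num) h2
    omega
  have hb' : (0 : ℝ) < b := by exact_mod_cast hb
  -- the exceptional set
  set C : Set ℝ := ⋃ i : ℕ × ℕ × ℤ, {(b * i.2.2 - (z i.1 - z i.2.1)) / (k i.1 - k i.2.1)} with hC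
  have hCc : C.Countable := Set.countable_iUnion fun i => Set.countable_singleton _
  have hdense : Dense Cᶜ := hCc.dense_compl ℝ
  intro v
  have hcont : Continuous fun t => ∑ r ∈ F with σ r = σ₀, g r v * V r t := by fun_prop
  have hzero : (fun t => ∑ r ∈ F with σ r = σ₀, g r v * V r t) = fun _ => 0 := by
    refine Continuous.ext_on hdense hcont continuous_const ?_
    intro t ht
    have := periodic_zero (f := fun v => ∑ r ∈ F with σ r = σ₀, g r v * V r t)
      (Finset.analyticOnNhd_fun_sum _ fun r _ => (hg r).mul analyticOnNhd_const) hb' ?_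
      (fun n => z n + k n * t) (fun n => hz n t) ?_ v
    · exact this
    · intro x
      refine Finset.sum_congr rfl fun r hr => ?_
      rw [hper r (Finset.mem_filter.mp hr).1 x]
    · intro n m l hnm heq
      apply ht
      refine Set.mem_iUnion.mpr ⟨(n, m, l), ?_⟩
      rw [Set.mem_singleton_iff, eq_div_iff (hkinj n m hnm)]
      simp only
      linarith
  exact fun t => congrFun hzero t

end ShearAux
open MeasureTheory

namespace ShearAux
open Filter Topology

/-- index: scale, shear, wavelet translation, scaling function translation -/
abbrev Idx := ℕ × ℤ × ℤ × ℤ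

/-- wavelet factor -/
noncomputable def Uu (q : ℝ → ℂ) (c₁ : ℝ) (r : Idx) (ξ : ℝ) : ℂ :=
  ex (c₁ * r.2.2.1 * (ξ / 2 ^ r.1)) * q (ξ / 2 ^ r.1)

/-- scaling function factor -/
noncomputable def Vv (p : ℝ → ℂ) (c₂ : ℝ) (r : Idx) (t : ℝ) : ℂ :=
  ex (c₂ * r.2.2.2 * (t / 2 ^ (r.1 / 2))) * p (t / 2 ^ (r.1 / 2))

/-- slope -/
noncomputable def sl (r : Idx) : ℝ := 2 ^ (r.1 / 2) * r.2.1 / 2 ^ r.1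

/-- the linear relation on the Fourier side -/
def Rel (p q : ℝ → ℂ) (c₁ c₂ : ℝ) {ι : Type*} (F₀ : Finset ι) (α : ι → ℂ) (m n : ι → ℤ)
    (F₁ : Finset Idx) (β : Idx → ℂ) (F₂ : Finset Idx) (γ : Idx → ℂ) : Prop :=
  ∀ ξ η : ℝ, ∑ i ∈ F₀, α i * ((ex (c₁ * m i * ξ) * p ξ) * (ex (c₁ * n i * η) * p η)) +
    ∑ r ∈ F₁, β r * (Uu q c₁ r ξ * Vv p c₂ r (η - sl r * ξ)) +
    ∑ r ∈ F₂, γ r * (Uu q c₁ r η * Vv p c₂ r (ξ - sl r * η)) = 0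

section
variable {p q : ℝ → ℂ} {c₁ c₂ : ℝ} {ι : Type*} {F₀ : Finset ι} {α : ι → ℂ} {m n : ι → ℤ}
    {F₁ : Finset Idx} {β : Idx → ℂ} {F₂ : Finset Idx} {γ : Idx → ℂ}

lemma Rel.swap (h : Rel p q c₁ c₂ F₀ α m n F₁ β F₂ γ) : Rel p q c₁ c₂ F₀ α n m F₂ γ F₁ β := by
  intro ξ η
  have h1 := h η ξ
  have e : ∑ i ∈ F₀, α i * ((ex (c₁ * m i * η) * p η) * (ex (c₁ * n i * ξ) * p ξ)) =
    ∑ i ∈ F₀, α i * ((ex (c₁ * n i * ξ) * p ξ) * (ex (c₁ * m i * η) * p η)) :=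
    Finset.sum_congr rfl fun i _ => by ring
  rw [e] at h1
  rw [← h1]
  ring

lemma ex_per {c : ℝ} {a b : ℕ} (hc : c * b = a) (k : ℤ) (n : ℕ) :
    Function.Periodic (fun v : ℝ => ex (c * k * (2 ^ n * v))) b := by
  intro v
  have : c * k * (2 ^ n * (v + b)) = c * k * (2 ^ n * v) + ((a * k * 2 ^ n : ℤ) : ℝ) := by
    push_cast
    linear_combination (k : ℝ) * 2 ^ n * hc
  simp only [this, ex_add_int]

lemma ex_bd (c : ℝ) (f : ℝ → ℝ) : Bd (fun v : ℝ => ex (c * f v)) :=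
  ⟨1, fun v => (norm_ex _).le⟩

lemma const_bd (c : ℂ) : Bd (fun _ : ℝ => c) := ⟨‖c‖, fun _ => le_rfl⟩

lemma TP_nat_per {f : ℝ → ℂ} (hf : f ∈ TP) (b : ℕ) : Function.Periodic f b := by
  intro x
  have := TP_add_int hf x b
  simpa using this

lemma an_ex2 (c d : ℝ) : AnalyticOnNhd ℝ (fun v : ℝ => ex (c * (d * v))) Set.univ := by
  have := analytic_ex_mul (c * d)
  simpa only [mul_assoc] using this

lemma ep_tend {A E : ℝ → ℂ} (h : Adm p q A E) (c d : ℝ) (hd : d ≠ 0) :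
    Tendsto (fun t => ex (c * (d * t)) * p (d * t)) (cocompact ℝ) (𝓝 0) := by
  have h1 : Tendsto (fun t => d * t) (cocompact ℝ) (cocompact ℝ) :=
    (Homeomorph.mulLeft₀ d hd).isClosedEmbedding.tendsto_cocompact
  have h2 := (h.ptend.comp h1).norm
  rw [norm_zero] at h2
  refine squeeze_zero_norm (fun t => ?_) h2
  rw [norm_mul, norm_ex, one_mul]
  rfl

lemma Vv_eq (c₂ : ℝ) (r : Idx) (d t : ℝ) : Vv p c₂ r (d * t) =
    ex (c₂ * r.2.2.2 * ((d / 2 ^ (r.1 / 2)) * t)) * p ((d / 2 ^ (r.1 / 2)) * t) := by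
  unfold Vv
  rw [mul_div_right_comm]

lemma Vv_cont (hp : Continuous p) (r : Idx) : Continuous (Vv p c₂ r) := by
  have := continuous_ex
  unfold Vv
  fun_prop

lemma Uu_cont (hq : Continuous q) (r : Idx) : Continuous (Uu q c₁ r) := by
  have := continuous_ex
  unfold Uu
  fun_prop

lemma pow_sub_eq {N j : ℕ} (h : j ≤ N) (v : ℝ) : (2 : ℝ) ^ N * v / 2 ^ j = 2 ^ (N - j) * v := by
  rw [pow_sub₀ _ two_ne_zero h]
  field_simp

lemma slope_main {A E : ℝ → ℂ} (h : Adm p q A E) {a b : ℕ} (hb : 0 < b) (hc : c₁ * b = a)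
    (hrel : Rel p q c₁ c₂ F₀ α m n F₁ β F₂ γ) (σ₀ : ℝ) (hσ₀ : σ₀ ≠ 0)
    (hσσ : ∀ r ∈ F₂, σ₀ * sl r ≠ 1) :
    ∀ ξ t, ∑ r ∈ F₁ with sl r = σ₀, β r * (Uu q c₁ r ξ * Vv p c₂ r t) = 0 := by
  classical
  have hp := h.pcont
  have hex := continuous_ex
  obtain ⟨N, hN⟩ : ∃ N : ℕ, ∀ r ∈ F₁ ∪ F₂, r.1 < N :=
    ⟨(F₁ ∪ F₂).sup (fun r => r.1) + 1, fun r hr =>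
      Nat.lt_succ_of_le (Finset.le_sup (f := fun r : Idx => r.1) hr)⟩
  have hN1 : ∀ r ∈ F₁, r.1 < N := fun r hr => hN r (Finset.mem_union_left _ hr)
  have hN2 : ∀ r ∈ F₂, r.1 < N := fun r hr => hN r (Finset.mem_union_right _ hr)
  obtain ⟨D, hD, hD0, T, S, hT, hS, hTr, hSr⟩ := h.clear2 N
  have hDU : ∀ r : Idx, r.1 < N → ∀ v, D v * Uu q c₁ r (2 ^ N * v) =
      p v * (S (N - r.1) v * ex (c₁ * r.2.2.1 * (2 ^ (N - r.1) * v))) := by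
    intro r hr v
    unfold Uu
    rw [pow_sub_eq hr.le]
    have := hSr (N - r.1) (by omega) (by omega) v
    linear_combination ex (c₁ * r.2.2.1 * (2 ^ (N - r.1) * v)) * this
  set gg : (Idx → ℂ) → Idx → ℝ → ℂ := fun β r v =>
    β r * (S (N - r.1) v * ex (c₁ * r.2.2.1 * (2 ^ (N - r.1) * v))) with hgg
  have hggA : ∀ β r, AnalyticOnNhd ℝ (gg β r) Set.univ := fun β r =>
    analyticOnNhd_const.mul ((TP_analytic (hS _)).mul (an_ex2 _ _))
  have hggB : ∀ β r, Bd (gg β r) := fun β r =>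
    (const_bd _).mul ((TP_bd (hS _)).mul (ex_bd _ _))
  have hggP : ∀ β r, Function.Periodic (gg β r) b := fun β r v => by
    simp only [hgg]
    rw [TP_nat_per (hS _) b v, show ex (c₁ * r.2.2.1 * (2 ^ (N - r.1) * (v + b))) = _ from
      ex_per hc r.2.2.1 (N - r.1) v]
  have hVt : ∀ r : Idx, Tendsto (fun t => Vv p c₂ r (2 ^ N * t)) (cocompact ℝ) (𝓝 0) := by
    intro r
    simp only [Vv_eq]
    exact ep_tend h _ _ (by positivity)
  have hVc : ∀ r : Idx, Continuous (fun t => Vv p c₂ r (2 ^ N * t)) := fun r =>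
    (Vv_cont hp r).comp (by fun_prop)
  have main := asym h hD hD0 (F₁.disjSum F₀) F₂
    (Sum.elim (gg β) (fun i v => α i * (T N v * ex (c₁ * m i * (2 ^ N * v)))))
    (Sum.elim (fun r t => Vv p c₂ r (2 ^ N * t))
      (fun i t => ex (c₁ * n i * (2 ^ N * t)) * p (2 ^ N * t)))
    (gg γ) (fun r t => Vv p c₂ r (2 ^ N * t))
    (Sum.elim sl (fun _ => 0)) sl
    (by
      rintro (r | i)
      · exact hggA β r
      · exact analyticOnNhd_const.mul ((TP_analytic (hT _)).mul (an_ex2 _ _)))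
    (fun r => an_cont (hggA γ r))
    (by
      rintro (r | i)
      · exact hVc r
      · simp only [Sum.elim_inr]
        fun_prop)
    hVc
    (by
      rintro (r | i)
      · exact hggB β r
      · exact (const_bd _).mul ((TP_bd (hT _)).mul (ex_bd _ _)))
    (hggB γ)
    (by
      rintro (r | i)
      · exact hVt r
      · exact ep_tend h _ _ (by positivity))
    hVt b hb
    (by
      rintro (r | i) _
      · exact hggP β r
      · intro v
        simp only [Sum.elim_inr]
        rw [TP_nat_per (hT _) b v, show ex (c₁ * m i * (2 ^ N * (v + b))) = _ from
          ex_per hc (m i) N v])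
    (by
      intro v w
      have h1 := hrel (2 ^ N * v) (2 ^ N * w)
      have h2 : (D v * D w) * (∑ i ∈ F₀, α i * ((ex (c₁ * m i * (2 ^ N * v)) * p (2 ^ N * v)) *
          (ex (c₁ * n i * (2 ^ N * w)) * p (2 ^ N * w)))) = p v * D w * ∑ i ∈ F₀,
          (α i * (T N v * ex (c₁ * m i * (2 ^ N * v)))) *
            (ex (c₁ * n i * (2 ^ N * (w - 0 * v))) * p (2 ^ N * (w - 0 * v))) := by
        rw [Finset.mul_sum, Finset.mul_sum]
        refine Finset.sum_congr rfl fun i _ => ?_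
        rw [zero_mul, sub_zero]
        have := hTr N le_rfl v
        linear_combination (D w * α i * ex (c₁ * m i * (2 ^ N * v)) *
          (ex (c₁ * n i * (2 ^ N * w)) * p (2 ^ N * w))) * this
      have h3 : (D v * D w) * (∑ r ∈ F₁, β r * (Uu q c₁ r (2 ^ N * v) *
          Vv p c₂ r (2 ^ N * w - sl r * (2 ^ N * v)))) =
          p v * D w * ∑ r ∈ F₁, gg β r v * Vv p c₂ r (2 ^ N * (w - sl r * v)) := by
        rw [Finset.mul_sum, Finset.mul_sum]
        refine Finset.sum_congr rfl fun r hr => ?_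
        rw [show 2 ^ N * w - sl r * (2 ^ N * v) = 2 ^ N * (w - sl r * v) by ring]
        have := hDU r (hN1 r hr) v
        simp only [hgg]
        linear_combination (D w * β r * Vv p c₂ r (2 ^ N * (w - sl r * v))) * this
      have h4 : (D v * D w) * (∑ r ∈ F₂, γ r * (Uu q c₁ r (2 ^ N * w) *
          Vv p c₂ r (2 ^ N * v - sl r * (2 ^ N * w)))) =
          p w * D v * ∑ r ∈ F₂, gg γ r w * Vv p c₂ r (2 ^ N * (v - sl r * w)) := by
        rw [Finset.mul_sum, Finset.mul_sum]
        refine Finset.sum_congr rfl fun r hr => ?_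
        rw [show 2 ^ N * v - sl r * (2 ^ N * w) = 2 ^ N * (v - sl r * w) by ring]
        have := hDU r (hN2 r hr) w
        simp only [hgg]
        linear_combination (D v * γ r * Vv p c₂ r (2 ^ N * (v - sl r * w))) * this
      rw [Finset.sum_disjSum]
      simp only [Sum.elim_inl, Sum.elim_inr]
      linear_combination (D v * D w) * h1 - h2 - h3 - h4)
    σ₀ hσ₀ hσσ
  have main2 : ∀ v t, ∑ r ∈ F₁ with sl r = σ₀, gg β r v * Vv p c₂ r (2 ^ N * t) = 0 := by
    intro v t
    have h1 := main v t
    rw [Finset.sum_filter, Finset.sum_disjSum] at h1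
    simp only [Sum.elim_inl, Sum.elim_inr, Ne.symm hσ₀, if_false, Finset.sum_const_zero,
      add_zero] at h1
    rw [Finset.sum_filter]
    exact h1
  intro ξ t
  have fin := cancel (f := D) (g := fun v => ∑ r ∈ F₁ with sl r = σ₀,
    β r * (Uu q c₁ r (2 ^ N * v) * Vv p c₂ r t)) (TP_analytic hD) hD0 (by
      have := fun r => Uu_cont (c₁ := c₁) h.qcont r
      fun_prop) (fun v => by
      have h1 := main2 v (t / 2 ^ N)
      rw [mul_div_cancel₀ t (by positivity : (2 : ℝ) ^ N ≠ 0)] at h1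
      have h2 : D v * ∑ r ∈ F₁ with sl r = σ₀, β r * (Uu q c₁ r (2 ^ N * v) * Vv p c₂ r t) =
          p v * ∑ r ∈ F₁ with sl r = σ₀, gg β r v * Vv p c₂ r t := by
        rw [Finset.mul_sum, Finset.mul_sum]
        refine Finset.sum_congr rfl fun r hr => ?_
        have := hDU r (hN1 r (Finset.mem_filter.mp hr).1) v
        simp only [hgg]
        linear_combination β r * Vv p c₂ r t * this
      rw [h2, h1, mul_zero]) (ξ / 2 ^ N)
  rwa [mul_div_cancel₀ ξ (by positivity : (2 : ℝ) ^ N ≠ 0)] at fin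
end

end ShearAux
open MeasureTheory

namespace ShearAux
open Filter Topology

/-- independence of the one dimensional systems, on the Fourier side -/
structure Ind (p q : ℝ → ℂ) (c₁ c₂ : ℝ) : Prop where
  q1 : ∀ (G : Finset (ℕ × ℤ)) (β : ℕ × ℤ → ℂ),
    (∀ ξ, ∑ x ∈ G, β x * (ex (c₁ * x.2 * (ξ / 2 ^ x.1)) * q (ξ / 2 ^ x.1)) = 0) →
      ∀ x ∈ G, β x = 0
  p1 : ∀ (F : Finset ℤ) (α : ℤ → ℂ),
    (∀ ξ, ∑ k ∈ F, α k * (ex (c₁ * k * ξ) * p ξ) = 0) → ∀ k ∈ F, α k = 0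
  p2 : ∀ (F : Finset ℤ) (α : ℤ → ℂ),
    (∀ ξ, ∑ k ∈ F, α k * (ex (c₂ * k * ξ) * p ξ) = 0) → ∀ k ∈ F, α k = 0

section
variable {p q : ℝ → ℂ} {c₁ c₂ : ℝ} {ι : Type*} {F₀ : Finset ι} {α : ι → ℂ} {m n : ι → ℤ}
    {F₁ : Finset Idx} {β : Idx → ℂ} {F₂ : Finset Idx} {γ : Idx → ℂ}

lemma Ind.tensor (h : Ind p q c₁ c₂) (S : Finset Idx)
    (hS : ∀ r ∈ S, ∀ r' ∈ S, r.1 = r'.1 → r.2.1 = r'.2.1)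
    (hz : ∀ ξ t, ∑ r ∈ S, β r * (Uu q c₁ r ξ * Vv p c₂ r t) = 0) : ∀ r ∈ S, β r = 0 := by
  classical
  intro r₀ hr₀
  set S' := S.filter (fun r => (r.1, r.2.2.1) = (r₀.1, r₀.2.2.1)) with hS'
  have h1 : ∀ t, ∑ r ∈ S', β r * Vv p c₂ r t = 0 := by
    intro t
    have := h.q1 (S.image fun r => (r.1, r.2.2.1))
      (fun x => ∑ r ∈ S with (r.1, r.2.2.1) = x, β r * Vv p c₂ r t) (fun ξ => by
        rw [← hz ξ t, ← Finset.sum_fiberwise_of_maps_to (g := fun r : Idx => (r.1, r.2.2.1))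
          (t := S.image fun r => (r.1, r.2.2.1)) (fun r hr => Finset.mem_image_of_mem _ hr)]
        refine Finset.sum_congr rfl fun x _ => ?_
        rw [Finset.sum_mul]
        refine Finset.sum_congr rfl fun r hr => ?_
        rw [← (Finset.mem_filter.mp hr).2]
        unfold Uu
        ring)
    exact this (r₀.1, r₀.2.2.1) (Finset.mem_image.mpr ⟨r₀, hr₀, rfl⟩)
  have hmem : ∀ r ∈ S', r = (r₀.1, r₀.2.1, r₀.2.2.1, r.2.2.2) := by
    intro r hr
    obtain ⟨hr1, hr2⟩ := Finset.mem_filter.mp hr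
    simp only [Prod.mk.injEq] at hr2
    have := hS r hr1 r₀ hr₀ hr2.1
    ext <;> simp [hr2.1, hr2.2, this]
  have h2 := h.p2 (S'.image fun r => r.2.2.2)
    (fun k => β (r₀.1, r₀.2.1, r₀.2.2.1, k)) (fun ξ => by
      rw [Finset.sum_image]
      · rw [← h1 (2 ^ (r₀.1 / 2) * ξ)]
        refine Finset.sum_congr rfl fun r hr => ?_
        rw [← hmem r hr]
        unfold Vv
        have e : r.1 = r₀.1 := by rw [hmem r hr]
        rw [e, mul_div_cancel_left₀ ξ (by positivity : (2 : ℝ) ^ (r₀.1 / 2) ≠ 0)]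
      · intro r hr r' hr' hrr
        rw [hmem r hr, hmem r' hr']
        simp only at hrr
        rw [hrr])
  have hr₀' : r₀ ∈ S' := Finset.mem_filter.mpr ⟨hr₀, rfl⟩
  have := h2 r₀.2.2.2 (Finset.mem_image.mpr ⟨r₀, hr₀', rfl⟩)
  simpa using this

lemma Ind.tensor0 (h : Ind p q c₁ c₂) (S : Finset (ℤ × ℤ)) (α : ℤ × ℤ → ℂ)
    (hz : ∀ ξ η, ∑ i ∈ S, α i * ((ex (c₁ * i.1 * ξ) * p ξ) * (ex (c₁ * i.2 * η) * p η)) = 0) :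
    ∀ i ∈ S, α i = 0 := by
  classical
  intro i₀ hi₀
  set S' := S.filter (fun r => r.1 = i₀.1) with hS'
  have h1 : ∀ η, ∑ i ∈ S', α i * (ex (c₁ * i.2 * η) * p η) = 0 := by
    intro η
    have := h.p1 (S.image fun r => r.1)
      (fun x => ∑ i ∈ S with i.1 = x, α i * (ex (c₁ * i.2 * η) * p η)) (fun ξ => by
        rw [← hz ξ η, ← Finset.sum_fiberwise_of_maps_to (g := fun r : ℤ × ℤ => r.1)
          (t := S.image fun r => r.1) (fun r hr => Finset.mem_image_of_mem _ hr)]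
        refine Finset.sum_congr rfl fun x _ => ?_
        rw [Finset.sum_mul]
        refine Finset.sum_congr rfl fun r hr => ?_
        rw [← (Finset.mem_filter.mp hr).2]
        ring)
    exact this i₀.1 (Finset.mem_image.mpr ⟨i₀, hi₀, rfl⟩)
  have hmem : ∀ r ∈ S', r = (i₀.1, r.2) := by
    intro r hr
    have := (Finset.mem_filter.mp hr).2
    ext <;> simp [this]
  have h2 := h.p1 (S'.image fun r => r.2) (fun k => α (i₀.1, k)) (fun ξ => by
      rw [Finset.sum_image]
      · rw [← h1 ξ]
        refine Finset.sum_congr rfl fun r hr => ?_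
        rw [← hmem r hr]
      · intro r hr r' hr' hrr
        rw [hmem r hr, hmem r' hr']
        simp only at hrr
        rw [hrr])
  exact h2 i₀.2 (Finset.mem_image.mpr ⟨i₀, Finset.mem_filter.mpr ⟨hi₀, rfl⟩, rfl⟩)

lemma Rel.mono (h : Rel p q c₁ c₂ F₀ α m n F₁ β F₂ γ) {F₁' F₂' : Finset Idx}
    (h1 : F₁' ⊆ F₁) (h2 : F₂' ⊆ F₂) (h1' : ∀ r ∈ F₁, r ∉ F₁' → β r = 0)
    (h2' : ∀ r ∈ F₂, r ∉ F₂' → γ r = 0) : Rel p q c₁ c₂ F₀ α m n F₁' β F₂' γ := by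
  intro ξ η
  rw [← h ξ η, Finset.sum_subset h1 fun r hr hr' => by rw [h1' r hr hr', zero_mul],
    Finset.sum_subset h2 fun r hr hr' => by rw [h2' r hr hr', zero_mul]]

lemma sl_zero {r : Idx} (h : r.2.1 = 0) : sl r = 0 := by simp [sl, h]

lemma slope_zero {A E : ℝ → ℂ} (h : Adm p q A E)
    (hdet : ∃ w, A w * E (w + 1 / 2) ≠ A (w + 1 / 2) * E w) (hi : Ind p q c₁ c₂)
    {a₁ b₁ a₂ b₂ : ℕ} (hb₁ : Odd b₁) (hb₂ : Odd b₂) (hc₁ : c₁ * b₁ = a₁) (hc₂ : c₂ * b₂ = a₂)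
    (hrel : Rel p q c₁ c₂ F₀ α m n F₁ β F₂ γ) (J : ℕ)
    (hk₁ : ∀ r ∈ F₁, r.2.1 = 0 ∧ r.1 ≤ J) (hk₂ : ∀ r ∈ F₂, r.2.1 = 0 ∧ r.1 ≤ J) :
    ∀ r ∈ F₁, r.1 = J → β r = 0 := by
  classical
  have hex := continuous_ex
  obtain ⟨D, hD, hD0, T, S, hT, hS, hTr, hSr⟩ := h.clear2 J
  have hDc := TP_cont hD
  have hTc := fun j => TP_cont (hT j)
  have hSc := fun j => TP_cont (hS j)
  have hc₁' : c₁ * ((b₁ * b₂ : ℕ) : ℝ) = (a₁ * b₂ : ℕ) := by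
    push_cast; rw [← hc₁]; ring
  have hc₂' : c₂ * ((b₁ * b₂ : ℕ) : ℝ) = (a₂ * b₁ : ℕ) := by
    push_cast; rw [← hc₂]; ring
  have hP : ∀ η v, D v * (∑ r ∈ F₁ with r.1 = J,
      β r * (ex (c₁ * r.2.2.1 * (2 ^ 0 * v)) * Vv p c₂ r η)) = 0 := by
    intro η
    refine h.key hdet (b₁ * b₂) (hb₁.mul hb₂) _ (fun v =>
      (∑ i ∈ F₀, α i * ((T J v * ex (c₁ * m i * (2 ^ J * v))) * (ex (c₁ * n i * η) * p η))) +
      (∑ r ∈ F₁ with ¬ r.1 = J, β r * ((S (J - r.1) v *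
        ex (c₁ * r.2.2.1 * (2 ^ (J - r.1) * v))) * Vv p c₂ r η)) +
      (∑ r ∈ F₂, γ r * (Uu q c₁ r η * (T (J - r.1 / 2) v *
        ex (c₂ * r.2.2.2 * (2 ^ (J - r.1 / 2) * v)))))) (by fun_prop) (by fun_prop) ?_ ?_ ?_
    · intro v
      simp only
      rw [TP_nat_per hD _ v]
      congr 1
      refine Finset.sum_congr rfl fun r _ => ?_
      rw [show ex (c₁ * r.2.2.1 * (2 ^ 0 * (v + (b₁ * b₂ : ℕ)))) = _ from ex_per hc₁' _ _ v]
    · intro v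
      simp only
      congr 1
      · congr 1
        · refine Finset.sum_congr rfl fun i _ => ?_
          rw [show ex (c₁ * m i * (2 ^ J * (v + (b₁ * b₂ : ℕ)))) = _ from ex_per hc₁' _ _ v,
            TP_nat_per (hT _) _ v]
        · refine Finset.sum_congr rfl fun r _ => ?_
          rw [show ex (c₁ * r.2.2.1 * (2 ^ (J - r.1) * (v + (b₁ * b₂ : ℕ)))) = _ from
            ex_per hc₁' _ _ v, TP_nat_per (hS _) _ v]
      · refine Finset.sum_congr rfl fun r _ => ?_
        rw [show ex (c₂ * r.2.2.2 * (2 ^ (J - r.1 / 2) * (v + (b₁ * b₂ : ℕ)))) = _ from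
            ex_per hc₂' _ _ v, TP_nat_per (hT _) _ v]
    · intro v
      have h1 := hrel (2 ^ J * v) η
      rw [← Finset.sum_filter_add_sum_filter_not F₁ (fun r => r.1 = J)] at h1
      have e0 : D v * (∑ i ∈ F₀, α i * ((ex (c₁ * m i * (2 ^ J * v)) * p (2 ^ J * v)) *
          (ex (c₁ * n i * η) * p η))) = (∑ i ∈ F₀, α i * ((T J v * ex (c₁ * m i * (2 ^ J * v))) *
          (ex (c₁ * n i * η) * p η))) * p v := by
        rw [Finset.mul_sum, Finset.sum_mul]
        refine Finset.sum_congr rfl fun i _ => ?_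
        linear_combination (α i * ex (c₁ * m i * (2 ^ J * v)) * (ex (c₁ * n i * η) * p η)) *
          hTr J le_rfl v
      have e1 : (∑ r ∈ F₁ with r.1 = J, β r * (Uu q c₁ r (2 ^ J * v) *
          Vv p c₂ r (η - sl r * (2 ^ J * v)))) = (∑ r ∈ F₁ with r.1 = J,
          β r * (ex (c₁ * r.2.2.1 * (2 ^ 0 * v)) * Vv p c₂ r η)) * q v := by
        rw [Finset.sum_mul]
        refine Finset.sum_congr rfl fun r hr => ?_
        obtain ⟨hr1, hr2⟩ := Finset.mem_filter.mp hr
        rw [sl_zero (hk₁ r hr1).1, zero_mul, sub_zero]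
        unfold Uu
        rw [hr2, pow_sub_eq le_rfl, Nat.sub_self, pow_zero, one_mul]
        ring
      have e2 : D v * (∑ r ∈ F₁ with ¬ r.1 = J, β r * (Uu q c₁ r (2 ^ J * v) *
          Vv p c₂ r (η - sl r * (2 ^ J * v)))) = (∑ r ∈ F₁ with ¬ r.1 = J, β r * ((S (J - r.1) v *
        ex (c₁ * r.2.2.1 * (2 ^ (J - r.1) * v))) * Vv p c₂ r η)) * p v := by
        rw [Finset.mul_sum, Finset.sum_mul]
        refine Finset.sum_congr rfl fun r hr => ?_
        obtain ⟨hr1, hr2⟩ := Finset.mem_filter.mp hr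
        have hr3 := (hk₁ r hr1).2
        rw [sl_zero (hk₁ r hr1).1, zero_mul, sub_zero]
        unfold Uu
        rw [pow_sub_eq hr3]
        linear_combination (β r * ex (c₁ * r.2.2.1 * (2 ^ (J - r.1) * v)) * Vv p c₂ r η) *
          hSr (J - r.1) (by omega) (by omega) v
      have e3 : D v * (∑ r ∈ F₂, γ r * (Uu q c₁ r η * Vv p c₂ r (2 ^ J * v - sl r * η))) =
          (∑ r ∈ F₂, γ r * (Uu q c₁ r η * (T (J - r.1 / 2) v *
        ex (c₂ * r.2.2.2 * (2 ^ (J - r.1 / 2) * v))))) * p v := by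
        rw [Finset.mul_sum, Finset.sum_mul]
        refine Finset.sum_congr rfl fun r hr => ?_
        have hr3 := (hk₂ r hr).2
        rw [sl_zero (hk₂ r hr).1, zero_mul, sub_zero]
        unfold Vv
        rw [pow_sub_eq (by omega : r.1 / 2 ≤ J)]
        linear_combination (γ r * Uu q c₁ r η * ex (c₂ * r.2.2.2 * (2 ^ (J - r.1 / 2) * v))) *
          hTr (J - r.1 / 2) (by omega) v
      rw [e1] at h1
      linear_combination D v * h1 - e0 - e2 - e3
  have hP' : ∀ η v, (∑ r ∈ F₁ with r.1 = J,
      β r * (ex (c₁ * r.2.2.1 * (2 ^ 0 * v)) * Vv p c₂ r η)) = 0 := fun η =>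
    cancel (TP_analytic hD) hD0 (by fun_prop) (hP η)
  have hfin := hi.tensor (β := β) (F₁.filter fun r => r.1 = J) (fun r hr r' hr' _ => by
    rw [(hk₁ r (Finset.mem_filter.mp hr).1).1, (hk₁ r' (Finset.mem_filter.mp hr').1).1])
    (fun ξ t => by
      have h1 := hP' t (ξ / 2 ^ J)
      have h2 : ∑ r ∈ F₁ with r.1 = J, β r * (Uu q c₁ r ξ * Vv p c₂ r t) =
        (∑ r ∈ F₁ with r.1 = J, β r * (ex (c₁ * r.2.2.1 * (2 ^ 0 * (ξ / 2 ^ J))) *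
          Vv p c₂ r t)) * q (ξ / 2 ^ J) := by
        rw [Finset.sum_mul]
        refine Finset.sum_congr rfl fun r hr => ?_
        unfold Uu
        rw [(Finset.mem_filter.mp hr).2, pow_zero, one_mul]
        ring
      rw [h2, h1, zero_mul])
  exact fun r hr hrJ => hfin r (Finset.mem_filter.mpr ⟨hr, hrJ⟩)

lemma all_zero {A E : ℝ → ℂ} (h : Adm p q A E)
    (hdet : ∃ w, A w * E (w + 1 / 2) ≠ A (w + 1 / 2) * E w) (hi : Ind p q c₁ c₂)
    {a₁ b₁ a₂ b₂ : ℕ} (hb₁ : Odd b₁) (hb₂ : Odd b₂) (hc₁ : c₁ * b₁ = a₁) (hc₂ : c₂ * b₂ = a₂)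
    (J : ℕ) : ∀ {F₁ F₂ : Finset Idx},
    Rel p q c₁ c₂ F₀ α m n F₁ β F₂ γ →
    (∀ r ∈ F₁, r.2.1 = 0 ∧ r.1 < J) → (∀ r ∈ F₂, r.2.1 = 0 ∧ r.1 < J) →
    (∀ r ∈ F₁, β r = 0) ∧ (∀ r ∈ F₂, γ r = 0) := by
  classical
  induction J with
  | zero =>
    intro F₁ F₂ _ h1 h2
    exact ⟨fun r hr => absurd (h1 r hr).2 (by omega), fun r hr => absurd (h2 r hr).2 (by omega)⟩
  | succ J ih =>
    intro F₁ F₂ hrel h1 h2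
    have h1' : ∀ r ∈ F₁, r.2.1 = 0 ∧ r.1 ≤ J := fun r hr => ⟨(h1 r hr).1, by
      have := (h1 r hr).2; omega⟩
    have h2' : ∀ r ∈ F₂, r.2.1 = 0 ∧ r.1 ≤ J := fun r hr => ⟨(h2 r hr).1, by
      have := (h2 r hr).2; omega⟩
    have t1 := slope_zero h hdet hi hb₁ hb₂ hc₁ hc₂ hrel J h1' h2'
    have t2 := slope_zero h hdet hi hb₁ hb₂ hc₁ hc₂ hrel.swap J h2' h1'
    have s1 : ∀ r ∈ F₁, r ∉ F₁.filter (fun r => r.1 < J) → β r = 0 := by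
      intro r hr hr'
      refine t1 r hr ?_
      have := (h1' r hr).2
      simp only [Finset.mem_filter, not_and] at hr'
      have := hr' hr
      omega
    have s2 : ∀ r ∈ F₂, r ∉ F₂.filter (fun r => r.1 < J) → γ r = 0 := by
      intro r hr hr'
      refine t2 r hr ?_
      have := (h2' r hr).2
      simp only [Finset.mem_filter, not_and] at hr'
      have := hr' hr
      omega
    have hrel' := hrel.mono (Finset.filter_subset _ _) (Finset.filter_subset _ _) s1 s2
    obtain ⟨u1, u2⟩ := ih hrel'
      (fun r hr => ⟨(h1 r (Finset.mem_filter.mp hr).1).1, (Finset.mem_filter.mp hr).2⟩)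
      (fun r hr => ⟨(h2 r (Finset.mem_filter.mp hr).1).1, (Finset.mem_filter.mp hr).2⟩)
    refine ⟨fun r hr => ?_, fun r hr => ?_⟩
    · by_cases hh : r ∈ F₁.filter (fun r => r.1 < J)
      · exact u1 r hh
      · exact s1 r hr hh
    · by_cases hh : r ∈ F₂.filter (fun r => r.1 < J)
      · exact u2 r hh
      · exact s2 r hr hh

lemma sl_inj {r r' : Idx} (h : sl r = sl r') (h1 : r.1 = r'.1) : r.2.1 = r'.2.1 := by
  unfold sl at h
  rw [h1, div_left_inj' (by positivity)] at h
  have := mul_left_cancel₀ (by positivity) h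
  exact_mod_cast this

lemma nonzero_slopes {A E : ℝ → ℂ} (h : Adm p q A E) (hi : Ind p q c₁ c₂)
    {a b : ℕ} (hb : 0 < b) (hc : c₁ * b = a)
    (hrel : Rel p q c₁ c₂ F₀ α m n F₁ β F₂ γ) (hσ : ∀ r ∈ F₁, ∀ r' ∈ F₂, sl r * sl r' ≠ 1) :
    ∀ r ∈ F₁, r.2.1 ≠ 0 → β r = 0 := by
  classical
  intro r hr hr0
  have hne : sl r ≠ 0 := fun h0 => hr0 (by
    unfold sl at h0
    simpa using h0)
  have h1 := slope_main h hb hc hrel (sl r) hne (hσ r hr)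
  refine hi.tensor (β := β) _ ?_ h1 r (Finset.mem_filter.mpr ⟨hr, rfl⟩)
  intro s hs s' hs' hss
  exact sl_inj ((Finset.mem_filter.mp hs).2.trans (Finset.mem_filter.mp hs').2.symm) hss

lemma sl_le {r : Idx} (h : |r.2.1| ≤ (2 : ℤ) ^ (r.1 / 2)) : |sl r| ≤ 1 := by
  unfold sl
  have h1 : |(r.2.1 : ℝ)| ≤ 2 ^ (r.1 / 2) := by exact_mod_cast h
  have h2 : (2 : ℝ) ^ (r.1 / 2) * 2 ^ (r.1 / 2) ≤ 2 ^ r.1 := by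
    rw [← pow_add]
    exact pow_le_pow_right₀ one_le_two (by omega)
  rw [abs_div, abs_mul, abs_of_pos (by positivity : (0 : ℝ) < 2 ^ (r.1 / 2)),
    abs_of_pos (by positivity : (0 : ℝ) < 2 ^ r.1), div_le_one (by positivity)]
  exact (mul_le_mul_of_nonneg_left h1 (by positivity)).trans h2

lemma sl_lt {r : Idx} (h : |r.2.1| ≤ (2 : ℤ) ^ (r.1 / 2) - 1) : |sl r| < 1 := by
  unfold sl
  have h0 : |r.2.1| < (2 : ℤ) ^ (r.1 / 2) := by omega
  have h1 : |(r.2.1 : ℝ)| < 2 ^ (r.1 / 2) := by exact_mod_cast h0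
  have h2 : (2 : ℝ) ^ (r.1 / 2) * 2 ^ (r.1 / 2) ≤ 2 ^ r.1 := by
    rw [← pow_add]
    exact pow_le_pow_right₀ one_le_two (by omega)
  rw [abs_div, abs_mul, abs_of_pos (by positivity : (0 : ℝ) < 2 ^ (r.1 / 2)),
    abs_of_pos (by positivity : (0 : ℝ) < 2 ^ r.1), div_lt_one (by positivity)]
  exact (mul_lt_mul_of_pos_left h1 (by positivity)).trans_le h2

end

lemma abstract_main {p q A E : ℝ → ℂ} {c₁ c₂ : ℝ} (h : Adm p q A E)
    (hdet : ∃ w, A w * E (w + 1 / 2) ≠ A (w + 1 / 2) * E w) (hi : Ind p q c₁ c₂)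
    {a₁ b₁ a₂ b₂ : ℕ} (hb₁ : Odd b₁) (hb₂ : Odd b₂) (hc₁ : c₁ * b₁ = a₁) (hc₂ : c₂ * b₂ = a₂)
    (F₀ : Finset (ℤ × ℤ)) (α : ℤ × ℤ → ℂ) (F₁ F₂ : Finset Idx) (β γ : Idx → ℂ)
    (hF₁ : ∀ r ∈ F₁, |r.2.1| ≤ (2 : ℤ) ^ (r.1 / 2))
    (hF₂ : ∀ r ∈ F₂, |r.2.1| ≤ (2 : ℤ) ^ (r.1 / 2) - 1)
    (hrel : Rel p q c₁ c₂ F₀ α Prod.fst Prod.snd F₁ β F₂ γ) :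
    (∀ i ∈ F₀, α i = 0) ∧ (∀ r ∈ F₁, β r = 0) ∧ (∀ r ∈ F₂, γ r = 0) := by
  classical
  have hσ : ∀ r ∈ F₁, ∀ r' ∈ F₂, sl r * sl r' ≠ 1 := by
    intro r hr r' hr' h1
    have h2 := sl_le (hF₁ r hr)
    have h3 := sl_lt (hF₂ r' hr')
    have h4 : |sl r| * |sl r'| = 1 := by rw [← abs_mul, h1, abs_one]
    nlinarith [abs_nonneg (sl r), abs_nonneg (sl r')]
  have n1 := nonzero_slopes h hi hb₁.pos hc₁ hrel hσ
  have n2 := nonzero_slopes h hi hb₁.pos hc₁ hrel.swap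
    (fun r hr r' hr' => by rw [mul_comm]; exact hσ r' hr' r hr)
  obtain ⟨N, hN⟩ : ∃ N : ℕ, ∀ r ∈ F₁ ∪ F₂, r.1 < N :=
    ⟨(F₁ ∪ F₂).sup (fun r => r.1) + 1, fun r hr =>
      Nat.lt_succ_of_le (Finset.le_sup (f := fun r : Idx => r.1) hr)⟩
  have s1 : ∀ r ∈ F₁, r ∉ F₁.filter (fun r => r.2.1 = 0) → β r = 0 := fun r hr hr' =>
    n1 r hr fun h0 => hr' (Finset.mem_filter.mpr ⟨hr, h0⟩)
  have s2 : ∀ r ∈ F₂, r ∉ F₂.filter (fun r => r.2.1 = 0) → γ r = 0 := fun r hr hr' =>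
    n2 r hr fun h0 => hr' (Finset.mem_filter.mpr ⟨hr, h0⟩)
  have hrel' := hrel.mono (Finset.filter_subset _ _) (Finset.filter_subset _ _) s1 s2
  obtain ⟨u1, u2⟩ := all_zero h hdet hi hb₁ hb₂ hc₁ hc₂ N hrel'
    (fun r hr => ⟨(Finset.mem_filter.mp hr).2,
      hN r (Finset.mem_union_left _ (Finset.mem_filter.mp hr).1)⟩)
    (fun r hr => ⟨(Finset.mem_filter.mp hr).2,
      hN r (Finset.mem_union_right _ (Finset.mem_filter.mp hr).1)⟩)
  have z1 : ∀ r ∈ F₁, β r = 0 := fun r hr => by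
    by_cases hh : r ∈ F₁.filter (fun r => r.2.1 = 0)
    · exact u1 r hh
    · exact s1 r hr hh
  have z2 : ∀ r ∈ F₂, γ r = 0 := fun r hr => by
    by_cases hh : r ∈ F₂.filter (fun r => r.2.1 = 0)
    · exact u2 r hh
    · exact s2 r hr hh
  refine ⟨?_, z1, z2⟩
  have hrel0 := hrel.mono (Finset.empty_subset _) (Finset.empty_subset _)
    (fun r hr _ => z1 r hr) (fun r hr _ => z2 r hr)
  refine hi.tensor0 F₀ α fun ξ η => ?_
  simpa using hrel0 ξ η

end ShearAux
open MeasureTheory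

namespace ShearAux
open Filter Topology

lemma cs_prod {f g : ℝ → ℂ} (hf : HasCompactSupport f) (hg : HasCompactSupport g)
    (a d b e b' : ℝ) (ha : a ≠ 0) (he : e ≠ 0) :
    HasCompactSupport (fun z : ℝ × ℝ => f (a * z.1 + d * z.2 - b) * g (e * z.2 - b')) := by
  have h1 : HasCompactSupport (fun z : ℝ × ℝ => f z.1 * g z.2) := by
    refine HasCompactSupport.intro (hf.isCompact.prod hg.isCompact) fun z hz => ?_
    rw [Set.mem_prod, not_and_or] at hz
    rcases hz with hz | hz
    · rw [image_eq_zero_of_notMem_tsupport hz, zero_mul]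
    · rw [image_eq_zero_of_notMem_tsupport hz, mul_zero]
  let H : ℝ × ℝ ≃ₜ ℝ × ℝ :=
    { toFun := fun z => (a * z.1 + d * z.2 - b, e * z.2 - b')
      invFun := fun w => ((w.1 + b - d * ((w.2 + b') / e)) / a, (w.2 + b') / e)
      left_inv := fun z => by
        ext
        · simp only
          field_simp
          ring
        · simp only
          field_simp
          ring
      right_inv := fun z => by
        ext
        · simp only
          field_simp
          ring
        · simp only
          field_simp
          ring
      continuous_toFun := by fun_prop
      continuous_invFun := by fun_prop }
  exact h1.comp_homeomorph H

lemma int_prod {f g : ℝ → ℂ} (hfc : Continuous f) (hgc : Continuous g)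
    (hf : HasCompactSupport f) (hg : HasCompactSupport g)
    (a d b e b' : ℝ) (ha : a ≠ 0) (he : e ≠ 0) (ξ η : ℝ) :
    Integrable (fun z : ℝ × ℝ => (ex (z.1 * ξ) * ex (z.2 * η)) *
      (f (a * z.1 + d * z.2 - b) * g (e * z.2 - b'))) volume := by
  have := continuous_ex
  exact Continuous.integrable_of_hasCompactSupport (by fun_prop)
    (cs_prod hf hg a d b e b' ha he).mul_left

lemma term_int {f g : ℝ → ℂ} (hfc : Continuous f) (hgc : Continuous g)
    (hf : HasCompactSupport f) (hg : HasCompactSupport g)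
    (a d b e b' : ℝ) (ha : 0 < a) (he : 0 < e) (ξ η : ℝ) :
    ∫ z : ℝ × ℝ, (ex (z.1 * ξ) * ex (z.2 * η)) *
      (f (a * z.1 + d * z.2 - b) * g (e * z.2 - b')) =
    ((a⁻¹ : ℝ) : ℂ) * ((e⁻¹ : ℝ) : ℂ) * ((ex (b * (ξ / a)) * fh f (ξ / a)) *
      (ex (b' * ((η - d / a * ξ) / e)) * fh g ((η - d / a * ξ) / e))) := by
  have hIntg := int_prod hfc hgc hf hg a d b e b' ha.ne' he.ne' ξ η
  rw [Measure.volume_eq_prod] at hIntg ⊢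
  rw [integral_prod_symm _ hIntg]
  have inner : ∀ y : ℝ, ∫ x : ℝ, (ex (x * ξ) * ex (y * η)) *
      (f (a * x + d * y - b) * g (e * y - b')) =
      (((a⁻¹ : ℝ) : ℂ) * (ex (b * (ξ / a)) * fh f (ξ / a))) *
        (ex (y * (η - d / a * ξ)) * g (e * y - b')) := by
    intro y
    have h1 : ∀ x : ℝ, (ex (x * ξ) * ex (y * η)) * (f (a * x + d * y - b) * g (e * y - b')) =
        (ex (y * η) * g (e * y - b')) * (ex (x * ξ) * f (a * x - (b - d * y))) := by
      intro x
      rw [show a * x + d * y - b = a * x - (b - d * y) by ring]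
      ring
    simp_rw [h1]
    rw [integral_const_mul, fh_comp f a ha]
    have h2 : ex ((b - d * y) * (ξ / a)) = ex (b * (ξ / a)) * ex (-(d * y * (ξ / a))) := by
      rw [← ex_add]
      congr 1
      ring
    have h3 : ex (y * (η - d / a * ξ)) = ex (y * η) * ex (-(d * y * (ξ / a))) := by
      rw [← ex_add]
      congr 1
      ring
    rw [h2, h3]
    ring
  simp_rw [inner]
  rw [integral_const_mul, fh_comp g e he]
  ring

lemma term_int' {f g : ℝ → ℂ} (hfc : Continuous f) (hgc : Continuous g)
    (hf : HasCompactSupport f) (hg : HasCompactSupport g)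
    (a d b e b' : ℝ) (ha : 0 < a) (he : 0 < e) (ξ η : ℝ) :
    Integrable (fun z : ℝ × ℝ => (ex (z.1 * ξ) * ex (z.2 * η)) *
      (f (a * z.2 + d * z.1 - b) * g (e * z.1 - b'))) volume ∧
    ∫ z : ℝ × ℝ, (ex (z.1 * ξ) * ex (z.2 * η)) *
      (f (a * z.2 + d * z.1 - b) * g (e * z.1 - b')) =
    ((a⁻¹ : ℝ) : ℂ) * ((e⁻¹ : ℝ) : ℂ) * ((ex (b * (η / a)) * fh f (η / a)) *
      (ex (b' * ((ξ - d / a * η) / e)) * fh g ((ξ - d / a * η) / e))) := by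
  have h1 := int_prod hfc hgc hf hg a d b e b' ha.ne' he.ne' η ξ
  rw [← term_int hfc hgc hf hg a d b e b' ha he η ξ]
  rw [Measure.volume_eq_prod] at h1 ⊢
  set G : ℝ × ℝ → ℂ := fun z => (ex (z.1 * η) * ex (z.2 * ξ)) *
      (f (a * z.1 + d * z.2 - b) * g (e * z.2 - b')) with hG
  have e : (fun z : ℝ × ℝ => (ex (z.1 * ξ) * ex (z.2 * η)) *
      (f (a * z.2 + d * z.1 - b) * g (e * z.1 - b'))) = fun z : ℝ × ℝ => G z.swap := by
    ext z
    simp only [hG, Prod.fst_swap, Prod.snd_swap]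
    ring
  rw [e]
  exact ⟨h1.swap, integral_prod_swap (μ := (volume : Measure ℝ)) (ν := (volume : Measure ℝ)) G⟩

lemma fh_zero_ind {f : ℝ → ℂ} (hf : Continuous f) (hs : HasCompactSupport f) {ι : Type*}
    (S : Finset ι) (c : ι → ℂ) (a b : ι → ℝ) (ha : ∀ i, 0 < a i)
    (h : ∀ ξ, ∑ i ∈ S, c i * (ex (b i * (ξ / a i)) * fh f (ξ / a i)) = 0) :
    ∀ x, ∑ i ∈ S, (c i * (a i : ℂ)) * f (a i * x - b i) = 0 := by
  intro x
  have h1 := fh_inj (fun x => ∑ i ∈ S, (c i * (a i : ℂ)) * f (a i * x - b i)) (by fun_prop)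
    (cs_sum _ _ fun i => (cs_comp hs (a i) (ha i).ne' (b i)).mul_left) (fun ξ => by
      rw [fh_sum S (fun i => c i * (a i : ℂ)) f hf hs a b ha, ← h ξ]
      refine Finset.sum_congr rfl fun i _ => ?_
      have : (a i : ℂ) ≠ 0 := by exact_mod_cast (ha i).ne'
      push_cast
      field_simp)
  exact congrFun h1 x

lemma ind_of {φ ψ : ℝ → ℂ} (hφc : Continuous φ) (hφs : HasCompactSupport φ)
    (hψc : Continuous ψ) (hψs : HasCompactSupport ψ) (c₁ c₂ : ℝ)
    (h1d : ∀ c : ℝ, (c = c₁ ∨ c = c₂) →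
      ∀ (F : Finset ℤ) (G : Finset (ℕ × ℤ)) (α : ℤ → ℂ) (β : ℕ × ℤ → ℂ),
        (fun x : ℝ => ∑ m ∈ F, α m * φ (x - c * m) +
            ∑ p ∈ G, β p * ψ ((2 : ℝ) ^ p.1 * x - c * p.2)) = 0 →
        (∀ m ∈ F, α m = 0) ∧ ∀ p ∈ G, β p = 0) : Ind (fh φ) (fh ψ) c₁ c₂ := by
  have hp : ∀ c : ℝ, (c = c₁ ∨ c = c₂) → ∀ (F : Finset ℤ) (α : ℤ → ℂ),
    (∀ ξ, ∑ k ∈ F, α k * (ex (c * k * ξ) * fh φ ξ) = 0) → ∀ k ∈ F, α k = 0 := by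
    intro c hc F α h
    have h1 := fh_zero_ind hφc hφs F α (fun _ => 1) (fun k => c * k) (fun _ => one_pos)
      (fun ξ => by simpa using h ξ)
    refine (h1d c hc F ∅ α 0 ?_).1
    ext x
    simpa using h1 x
  refine ⟨?_, hp c₁ (Or.inl rfl), hp c₂ (Or.inr rfl)⟩
  intro G β h x hx
  have h1 := fh_zero_ind hψc hψs G β (fun x => 2 ^ x.1) (fun x => c₁ * x.2)
    (fun _ => by positivity) h
  have h2 := (h1d c₁ (Or.inl rfl) ∅ G 0 (fun x => β x * (((2 : ℝ) ^ x.1 : ℝ) : ℂ)) (by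
    ext x
    simpa using h1 x)).2 x hx
  rcases mul_eq_zero.mp h2 with h3 | h3
  · exact h3
  · exfalso
    have : (2 : ℝ) ^ x.1 ≠ 0 := by positivity
    exact this (by exact_mod_cast h3)

lemma adm_of {φ ψ : ℝ → ℂ} (hφc : Continuous φ) (hφs : HasCompactSupport φ)
    (hφ0 : φ ≠ 0) (hψ0 : ψ ≠ 0)
    (hφON : ∀ m m' : ℤ,
      (∫ x : ℝ, (starRingEnd ℂ) (φ (x - m)) * φ (x - m')) = if m = m' then 1 else 0)
    (hψc : Continuous ψ) (hψs : HasCompactSupport ψ)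
    (hψspan : ∀ (J j : ℕ), j ≤ J → ∀ l : ℤ, ∀ ε : ℝ, 0 < ε →
      ∃ (F : Finset ℤ) (a : ℤ → ℂ),
        eLpNorm (fun x : ℝ =>
            ψ ((2 : ℝ) ^ j * x - l) - ∑ k ∈ F, a k * φ ((2 : ℝ) ^ (J + 1) * x - k)) 2 volume
          < ENNReal.ofReal ε) :
    ∃ A E, Adm (fh φ) (fh ψ) A E := by
  have hex : ∀ J : ℕ, ∃ (F : Finset ℤ) (a : ℤ → ℂ), ∀ v,
      fh ψ (2 ^ (J + 1) * v) = (∑ k ∈ F, a k * ex (k * v)) * fh φ v := by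
    intro J
    obtain ⟨F, a, h⟩ := expand φ ψ hφc hφs hφON hψc hψs (2 ^ (J + 1)) (by positivity)
      (fun ε hε => by simpa using hψspan J 0 (Nat.zero_le _) 0 ε hε)
    refine ⟨F, fun k => a k * ((((2 : ℝ) ^ (J + 1))⁻¹ : ℝ) : ℂ), fun v => ?_⟩
    have h1 := fh_sum F a φ hφc hφs (fun _ => 2 ^ (J + 1)) (fun k => (k : ℝ))
      (fun _ => by positivity) (2 ^ (J + 1) * v)
    rw [← funext h] at h1
    rw [h1, Finset.sum_mul]
    refine Finset.sum_congr rfl fun k _ => ?_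
    simp only
    rw [mul_div_cancel_left₀ v (by positivity : (2 : ℝ) ^ (J + 1) ≠ 0)]
    ring
  obtain ⟨F, a, h0⟩ := hex 0
  obtain ⟨G, b, h1⟩ := hex 1
  have hA : ∀ v, fh ψ (2 * v) = (∑ k ∈ F, a k * ex (k * v)) * fh φ v := by
    intro v
    have := h0 v
    rwa [zero_add, pow_one] at this
  refine ⟨fun v => ∑ k ∈ F, a k * ex (k * v), fun v => ∑ k ∈ G, b k * ex (k * v),
    fh_analytic φ hφc hφs, fh_analytic ψ hψc hψs, ?_, ?_, fh_tendsto φ, TP_sum F a, TP_sum G b,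
    hA, ?_⟩
  · by_contra hcon
    push Not at hcon
    exact hφ0 (fh_inj φ hφc hφs hcon)
  · by_contra hcon
    push Not at hcon
    exact hψ0 (fh_inj ψ hψc hψs hcon)
  · intro v
    have e1 := hA (2 * v)
    have e2 := h1 v
    rw [show (2 : ℝ) ^ (1 + 1) * v = 2 * (2 * v) by ring] at e2
    rw [← e2, ← e1]

end ShearAux
open MeasureTheory

namespace ShearAux
open Filter Topology

/-- integrable with given integral -/
def HI (f : ℝ × ℝ → ℂ) (v : ℂ) : Prop := Integrable f volume ∧ ∫ z, f z = v

lemma HI.add {f g : ℝ × ℝ → ℂ} {v w : ℂ} (hf : HI f v) (hg : HI g w) :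
    HI (fun z => f z + g z) (v + w) :=
  ⟨hf.1.add hg.1, by rw [integral_add hf.1 hg.1, hf.2, hg.2]⟩

lemma HI.sum {ι : Type*} (S : Finset ι) {f : ι → ℝ × ℝ → ℂ} {v : ι → ℂ}
    (h : ∀ i ∈ S, HI (f i) (v i)) : HI (fun z => ∑ i ∈ S, f i z) (∑ i ∈ S, v i) :=
  ⟨integrable_finsetSum _ fun i hi => (h i hi).1, by
    rw [integral_finsetSum _ fun i hi => (h i hi).1]
    exact Finset.sum_congr rfl fun i hi => (h i hi).2⟩

lemma HI.congr_mul {f g : ℝ × ℝ → ℂ} {v w : ℂ} (hf : HI f v) (c : ℂ) (h : ∀ z, g z = c * f z)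
    (hw : w = c * v) : HI g w := by
  rw [funext h, hw]
  exact ⟨hf.1.const_mul c, by rw [integral_const_mul, hf.2]⟩

/-- exchange the two translation indices -/
def sw : Idx ≃ Idx where
  toFun r := (r.1, r.2.1, r.2.2.2, r.2.2.1)
  invFun r := (r.1, r.2.1, r.2.2.2, r.2.2.1)
  left_inv _ := rfl
  right_inv _ := rfl

/-- normalising weight -/
noncomputable def wt (r : Idx) : ℂ :=
  (((2 : ℝ) ^ ((3 * (r.1 : ℝ)) / 4) : ℝ) : ℂ) * ((((2 : ℝ) ^ r.1)⁻¹ : ℝ) : ℂ) *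
    ((((2 : ℝ) ^ (r.1 / 2))⁻¹ : ℝ) : ℂ)

lemma wt_ne (r : Idx) : wt r ≠ 0 := by
  unfold wt
  refine mul_ne_zero (mul_ne_zero ?_ ?_) ?_ <;> rw [Complex.ofReal_ne_zero] <;> positivity

lemma rel_of {φ ψ : ℝ → ℂ} (hφc : Continuous φ) (hφs : HasCompactSupport φ)
    (hψc : Continuous ψ) (hψs : HasCompactSupport ψ) (c₁ c₂ : ℝ)
    (F₀ : Finset (ℤ × ℤ)) (F₁ F₂ : Finset Idx) (α : ℤ × ℤ → ℂ) (β γ : Idx → ℂ)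
    (h : ∀ x : ℝ × ℝ,
          (∑ m ∈ F₀, α m * (φ (x.1 - c₁ * m.1) * φ (x.2 - c₁ * m.2))) +
          (∑ p ∈ F₁, β p * ((((2 : ℝ) ^ ((3 * (p.1 : ℝ)) / 4) : ℝ) : ℂ) *
            ψ ((2 : ℝ) ^ p.1 * x.1 + (2 : ℝ) ^ (p.1 / 2) * (p.2.1 : ℝ) * x.2 - c₁ * p.2.2.1) *
            φ ((2 : ℝ) ^ (p.1 / 2) * x.2 - c₂ * p.2.2.2))) +
          (∑ p ∈ F₂, γ p * ((((2 : ℝ) ^ ((3 * (p.1 : ℝ)) / 4) : ℝ) : ℂ) *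
            φ ((2 : ℝ) ^ (p.1 / 2) * x.1 - c₂ * p.2.2.1) *
            ψ ((2 : ℝ) ^ p.1 * x.2 + (2 : ℝ) ^ (p.1 / 2) * (p.2.1 : ℝ) * x.1 - c₁ * p.2.2.2)))
          = 0) :
    Rel (fh φ) (fh ψ) c₁ c₂ F₀ α Prod.fst Prod.snd F₁ (fun r => β r * wt r)
      (F₂.map sw.toEmbedding) (fun r => γ (sw r) * wt r) := by
  intro ξ η
  rw [Finset.sum_map]
  have H0 := HI.sum F₀ (f := fun m z => (ex (z.1 * ξ) * ex (z.2 * η)) *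
      (α m * (φ (z.1 - c₁ * m.1) * φ (z.2 - c₁ * m.2))))
    (v := fun i => α i * ((ex (c₁ * i.1 * ξ) * fh φ ξ) * (ex (c₁ * i.2 * η) * fh φ η)))
    (fun m _ => by
      refine HI.congr_mul ⟨int_prod hφc hφc hφs hφs 1 0 (c₁ * m.1) 1 (c₁ * m.2) one_ne_zero
        one_ne_zero ξ η, term_int hφc hφc hφs hφs 1 0 (c₁ * m.1) 1 (c₁ * m.2) one_pos one_pos ξ η⟩
        (α m) (fun z => ?_) ?_
      · simp only [one_mul, zero_mul, add_zero]
        ring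
      · simp)
  have H1 := HI.sum F₁ (f := fun p z => (ex (z.1 * ξ) * ex (z.2 * η)) *
      (β p * ((((2 : ℝ) ^ ((3 * (p.1 : ℝ)) / 4) : ℝ) : ℂ) *
            ψ ((2 : ℝ) ^ p.1 * z.1 + (2 : ℝ) ^ (p.1 / 2) * (p.2.1 : ℝ) * z.2 - c₁ * p.2.2.1) *
            φ ((2 : ℝ) ^ (p.1 / 2) * z.2 - c₂ * p.2.2.2))))
    (v := fun r => (β r * wt r) * (Uu (fh ψ) c₁ r ξ * Vv (fh φ) c₂ r (η - sl r * ξ)))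
    (fun r _ => by
      refine HI.congr_mul ⟨int_prod hψc hφc hψs hφs (2 ^ r.1) (2 ^ (r.1 / 2) * (r.2.1 : ℝ))
        (c₁ * r.2.2.1) (2 ^ (r.1 / 2)) (c₂ * r.2.2.2) (by positivity) (by positivity) ξ η,
        term_int hψc hφc hψs hφs (2 ^ r.1) (2 ^ (r.1 / 2) * (r.2.1 : ℝ))
        (c₁ * r.2.2.1) (2 ^ (r.1 / 2)) (c₂ * r.2.2.2) (by positivity) (by positivity) ξ η⟩
        (β r * (((2 : ℝ) ^ ((3 * (r.1 : ℝ)) / 4) : ℝ) : ℂ)) (fun z => ?_) ?_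
      · ring
      · unfold wt Uu Vv sl
        ring)
  have H2 := HI.sum F₂ (f := fun p z => (ex (z.1 * ξ) * ex (z.2 * η)) *
      (γ p * ((((2 : ℝ) ^ ((3 * (p.1 : ℝ)) / 4) : ℝ) : ℂ) *
            φ ((2 : ℝ) ^ (p.1 / 2) * z.1 - c₂ * p.2.2.1) *
            ψ ((2 : ℝ) ^ p.1 * z.2 + (2 : ℝ) ^ (p.1 / 2) * (p.2.1 : ℝ) * z.1 - c₁ * p.2.2.2))))
    (v := fun r => (γ r * wt (sw r)) *
      (Uu (fh ψ) c₁ (sw r) η * Vv (fh φ) c₂ (sw r) (ξ - sl (sw r) * η)))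
    (fun r _ => by
      refine HI.congr_mul (term_int' hψc hφc hψs hφs (2 ^ r.1) (2 ^ (r.1 / 2) * (r.2.1 : ℝ))
        (c₁ * r.2.2.2) (2 ^ (r.1 / 2)) (c₂ * r.2.2.1) (by positivity) (by positivity) ξ η)
        (γ r * (((2 : ℝ) ^ ((3 * (r.1 : ℝ)) / 4) : ℝ) : ℂ)) (fun z => ?_) ?_
      · ring
      · unfold wt Uu Vv sl
        simp only [sw, Equiv.coe_fn_mk]
        ring)
  have H := ((H0.add H1).add H2).2
  have e : (∫ z : ℝ × ℝ, (∑ m ∈ F₀, (ex (z.1 * ξ) * ex (z.2 * η)) *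
      (α m * (φ (z.1 - c₁ * m.1) * φ (z.2 - c₁ * m.2)))) +
      (∑ p ∈ F₁, (ex (z.1 * ξ) * ex (z.2 * η)) *
      (β p * ((((2 : ℝ) ^ ((3 * (p.1 : ℝ)) / 4) : ℝ) : ℂ) *
            ψ ((2 : ℝ) ^ p.1 * z.1 + (2 : ℝ) ^ (p.1 / 2) * (p.2.1 : ℝ) * z.2 - c₁ * p.2.2.1) *
            φ ((2 : ℝ) ^ (p.1 / 2) * z.2 - c₂ * p.2.2.2)))) +
      (∑ p ∈ F₂, (ex (z.1 * ξ) * ex (z.2 * η)) *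
      (γ p * ((((2 : ℝ) ^ ((3 * (p.1 : ℝ)) / 4) : ℝ) : ℂ) *
            φ ((2 : ℝ) ^ (p.1 / 2) * z.1 - c₂ * p.2.2.1) *
            ψ ((2 : ℝ) ^ p.1 * z.2 + (2 : ℝ) ^ (p.1 / 2) * (p.2.1 : ℝ) * z.1
              - c₁ * p.2.2.2))))) = 0 := by
    rw [← integral_zero (ℝ × ℝ) ℂ (μ := volume)]
    congr 1
    ext z
    rw [← Finset.mul_sum, ← Finset.mul_sum, ← Finset.mul_sum, ← mul_add, ← mul_add, h z, mul_zero]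
  rw [e] at H
  exact H.symm

end ShearAux

theorem stmt5
    -- admissibility hypotheses on φ¹ (= φ) and ψ¹ (= ψ)
    (s : ℝ) (hs : 0 < s) (φ ψ : ℝ → ℂ)
    (hφc : Continuous φ) (hφsupp : tsupport φ = Set.Icc 0 s)
    (hφON : ∀ m m' : ℤ,
      (∫ x : ℝ, (starRingEnd ℂ) (φ (x - m)) * φ (x - m')) = if m = m' then 1 else 0)
    (hψc : Continuous ψ) (hψcs : HasCompactSupport ψ)
    (hψorth : ∀ (j j' : ℕ) (l l' : ℤ), (j, l) ≠ (j', l') →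
      (∫ x : ℝ, (starRingEnd ℂ) (ψ ((2 : ℝ) ^ j * x - l)) * ψ ((2 : ℝ) ^ j' * x - l')) = 0)
    (hψne : ∀ (j : ℕ) (l : ℤ), (fun x : ℝ => ψ ((2 : ℝ) ^ j * x - l)) ≠ 0)
    (hψspan : ∀ (J j : ℕ), j ≤ J → ∀ l : ℤ, ∀ ε : ℝ, 0 < ε →
      ∃ (F : Finset ℤ) (a : ℤ → ℂ),
        eLpNorm (fun x : ℝ =>
            ψ ((2 : ℝ) ^ j * x - l) - ∑ k ∈ F, a k * φ ((2 : ℝ) ^ (J + 1) * x - k)) 2 volume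
          < ENNReal.ofReal ε)
    -- sampling constants
    (a₁ b₁ a₂ b₂ : ℕ) (ha₁ : 0 < a₁) (ha₂ : 0 < a₂) (hb₁ : 0 < b₁) (hb₂ : 0 < b₂)
    (hb₁odd : Odd b₁) (hb₂odd : Odd b₂)
    (c₁ c₂ : ℝ) (hc₁ : c₁ = (a₁ : ℝ) / b₁) (hc₂ : c₂ = (a₂ : ℝ) / b₂)
    -- linear independence of the sampled 1D wavelet system
    (h1d : ∀ c : ℝ, (c = c₁ ∨ c = c₂) →
      ∀ (F : Finset ℤ) (G : Finset (ℕ × ℤ)) (α : ℤ → ℂ) (β : ℕ × ℤ → ℂ),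
        (fun x : ℝ => ∑ m ∈ F, α m * φ (x - c * m) +
            ∑ p ∈ G, β p * ψ ((2 : ℝ) ^ p.1 * x - c * p.2)) = 0 →
        (∀ m ∈ F, α m = 0) ∧ ∀ p ∈ G, β p = 0) :
    -- conclusion: linear independence of SH(φ, ψ, ψ̃, c) in L²(ℝ²)
    ∀ (F₀ : Finset (ℤ × ℤ)) (F₁ F₂ : Finset (ℕ × ℤ × ℤ × ℤ))
      (α : ℤ × ℤ → ℂ) (β γ : ℕ × ℤ × ℤ × ℤ → ℂ),
      (∀ p ∈ F₁, |p.2.1| ≤ (2 : ℤ) ^ (p.1 / 2)) →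
      (∀ p ∈ F₂, |p.2.1| ≤ (2 : ℤ) ^ (p.1 / 2) - 1) →
      (fun x : ℝ × ℝ =>
          (∑ m ∈ F₀, α m * (φ (x.1 - c₁ * m.1) * φ (x.2 - c₁ * m.2))) +
          (∑ p ∈ F₁, β p * ((((2 : ℝ) ^ ((3 * (p.1 : ℝ)) / 4) : ℝ) : ℂ) *
            ψ ((2 : ℝ) ^ p.1 * x.1 + (2 : ℝ) ^ (p.1 / 2) * (p.2.1 : ℝ) * x.2 - c₁ * p.2.2.1) *
            φ ((2 : ℝ) ^ (p.1 / 2) * x.2 - c₂ * p.2.2.2))) +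
          (∑ p ∈ F₂, γ p * ((((2 : ℝ) ^ ((3 * (p.1 : ℝ)) / 4) : ℝ) : ℂ) *
            φ ((2 : ℝ) ^ (p.1 / 2) * x.1 - c₂ * p.2.2.1) *
            ψ ((2 : ℝ) ^ p.1 * x.2 + (2 : ℝ) ^ (p.1 / 2) * (p.2.1 : ℝ) * x.1 - c₁ * p.2.2.2))))
        =ᵐ[volume] 0 →
      (∀ m ∈ F₀, α m = 0) ∧ (∀ p ∈ F₁, β p = 0) ∧ (∀ p ∈ F₂, γ p = 0) := by
  intro F₀ F₁ F₂ α β γ hF₁ hF₂ hae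
  have hφs : HasCompactSupport φ := by
    unfold HasCompactSupport
    rw [hφsupp]
    exact isCompact_Icc
  have hφ0 : φ ≠ 0 := by
    rintro rfl
    have h0 : (0 : ℝ) ∈ Set.Icc 0 s := ⟨le_rfl, hs.le⟩
    rw [← hφsupp] at h0
    simp [tsupport] at h0
  have hψ0 : ψ ≠ 0 := by
    rintro rfl
    exact hψne 0 0 rfl
  obtain ⟨A, E, hadm⟩ := ShearAux.adm_of hφc hφs hφ0 hψ0 hφON hψc hψcs hψspan
  have hdet := ShearAux.det_ne hψc hψcs hψorth hadm
  have hind := ShearAux.ind_of hφc hφs hψc hψcs c₁ c₂ h1d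
  have hzero := (Continuous.ae_eq_iff_eq volume (by fun_prop) continuous_zero).mp hae
  have hrel := ShearAux.rel_of hφc hφs hψc hψcs c₁ c₂ F₀ F₁ F₂ α β γ (fun x => congrFun hzero x)
  have hb₁' : (b₁ : ℝ) ≠ 0 := by exact_mod_cast hb₁.ne'
  have hb₂' : (b₂ : ℝ) ≠ 0 := by exact_mod_cast hb₂.ne'
  obtain ⟨z0, z1, z2⟩ := ShearAux.abstract_main hadm hdet hind hb₁odd hb₂odd
    (by rw [hc₁, div_mul_cancel₀ _ hb₁']) (by rw [hc₂, div_mul_cancel₀ _ hb₂'])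
    F₀ α F₁ (F₂.map ShearAux.sw.toEmbedding) _ _ hF₁ (by
      intro r hr
      obtain ⟨r', hr', rfl⟩ := Finset.mem_map.mp hr
      exact hF₂ r' hr') hrel
  refine ⟨z0, fun r hr => ?_, fun r hr => ?_⟩
  · exact (mul_eq_zero.mp (z1 r hr)).resolve_right (ShearAux.wt_ne r)
  · exact (mul_eq_zero.mp (z2 (ShearAux.sw r)
      (Finset.mem_map.mpr ⟨r, hr, rfl⟩))).resolve_right (ShearAux.wt_ne _)
end

section
/- Let g, m : ℝ → ℂ with g continuous and g(0) = 1, and suppose the scaling relation g(ξ) = g(ξ/2) · m(ξ/2) holds for all ξ ∈ ℝ. If m(ξ) ≠ 0 for all ξ ∈ (−1, 1), then g(ξ) ≠ 0 for all ξ ∈ (−2, 2); in particular, inf_{|ξ| ≤ 1/2} |g(ξ)|² > 0. -/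
/-- If `g` is continuous with `g(0) = 1`, satisfies the scaling relation
`g(ξ) = g(ξ/2) m(ξ/2)`, and `m` does not vanish on `(-1, 1)`, then `g` does not vanish on
`(-2, 2)`; in particular `inf_{|ξ| ≤ 1/2} |g(ξ)|² > 0`. -/
theorem stmt10 (g m : ℝ → ℂ) (hg : Continuous g) (hg0 : g 0 = 1)
    (hscale : ∀ ξ : ℝ, g ξ = g (ξ / 2) * m (ξ / 2))
    (hm : ∀ ξ ∈ Set.Ioo (-1 : ℝ) 1, m ξ ≠ 0) :
    (∀ ξ ∈ Set.Ioo (-2 : ℝ) 2, g ξ ≠ 0) ∧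
      0 < ⨅ ξ : {ξ : ℝ // |ξ| ≤ 1 / 2}, ‖g ξ.1‖ ^ 2 := by
  have key : ∀ ξ ∈ Set.Ioo (-2 : ℝ) 2, g ξ ≠ 0 := by
    intro ξ hξ h0
    have hz : ∀ n : ℕ, g (ξ * (1 / 2) ^ n) = 0 := by
      intro n
      induction n with
      | zero => simpa using h0
      | succ k ih =>
        have hp : (0 : ℝ) < (1 / 2) ^ k := by positivity
        have hp1 : ((1 : ℝ) / 2) ^ k ≤ 1 := pow_le_one₀ (by norm_num) (by norm_num)
        have e : ξ * (1 / 2) ^ (k + 1) = ξ * (1 / 2) ^ k / 2 := by ring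
        rw [hscale] at ih
        rw [e]
        refine (mul_eq_zero.mp ih).resolve_right (hm _ ⟨?_, ?_⟩)
        · nlinarith [hξ.1, hξ.2]
        · nlinarith [hξ.1, hξ.2]
    have ht : Filter.Tendsto (fun n : ℕ => ξ * (1 / 2 : ℝ) ^ n) Filter.atTop (nhds 0) := by
      have := (tendsto_pow_atTop_nhds_zero_of_lt_one (r := (1 / 2 : ℝ))
        (by norm_num) (by norm_num)).const_mul ξ
      simpa only [mul_zero] using this
    have h1 := (hg.tendsto 0).comp ht
    have h2 : Filter.Tendsto (g ∘ fun n : ℕ => ξ * (1 / 2 : ℝ) ^ n) Filter.atTop (nhds 0) := by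
      refine tendsto_const_nhds.congr (fun n => ?_)
      exact (hz n).symm
    have h3 := tendsto_nhds_unique h1 h2
    rw [hg0] at h3
    exact one_ne_zero h3
  refine ⟨key, ?_⟩
  obtain ⟨x, hx, hmin⟩ := (isCompact_Icc (a := (-(1 / 2) : ℝ)) (b := 1 / 2)).exists_isMinOn
    ⟨0, by norm_num⟩ (f := fun ξ => ‖g ξ‖ ^ 2) (by fun_prop)
  have hpos : 0 < ‖g x‖ ^ 2 := by
    have : g x ≠ 0 := key x ⟨by linarith [hx.1], by linarith [hx.2]⟩
    positivity
  haveI : Nonempty {ξ : ℝ // |ξ| ≤ 1 / 2} := ⟨⟨0, by norm_num⟩⟩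
  refine hpos.trans_le (le_ciInf fun y => ?_)
  exact hmin (abs_le.mp y.2)
end

section
/- For an integer N ≥ 1, define m₀ : ℝ → ℂ by m₀(ξ) = ((1 + e^{−iπξ})/2)^N · ∑_{s=0}^{N−1} C(N−1+s, s) · sin^{2s}(πξ/2), where C(·,·) denotes the binomial coefficient. Then m₀(0) = 1 and m₀(ξ) ≠ 0 for every ξ ∈ (−1, 1). -/
/-- The Daubechies low-pass filter
`m₀(ξ) = ((1 + e^(-iπξ))/2)^N ∑_{s=0}^{N-1} C(N-1+s, s) sin^(2s)(πξ/2)`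
satisfies `m₀(0) = 1` and `m₀(ξ) ≠ 0` for all `ξ ∈ (-1, 1)`. -/
theorem stmt11 (N : ℕ) (hN : 1 ≤ N) (m₀ : ℝ → ℂ)
    (hm₀ : ∀ ξ : ℝ, m₀ ξ =
      ((1 + Complex.exp (((-(Real.pi * ξ) : ℝ) : ℂ) * Complex.I)) / 2) ^ N *
        ∑ s ∈ Finset.range N, (Nat.choose (N - 1 + s) s : ℂ) *
          ((Real.sin (Real.pi * ξ / 2) : ℂ)) ^ (2 * s)) :
    m₀ 0 = 1 ∧ ∀ ξ ∈ Set.Ioo (-1 : ℝ) 1, m₀ ξ ≠ 0 := by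
  obtain ⟨n, rfl⟩ : ∃ n, N = n + 1 := ⟨N - 1, by omega⟩
  constructor
  · rw [hm₀, Finset.sum_range_succ']
    have h : ∀ s ∈ Finset.range n, (Nat.choose (n + 1 - 1 + (s + 1)) (s + 1) : ℂ) *
        ((Real.sin (Real.pi * 0 / 2) : ℂ)) ^ (2 * (s + 1)) = 0 := by
      intro s _
      simp
    rw [Finset.sum_eq_zero h]
    norm_num
  · intro ξ hξ
    obtain ⟨h1, h2⟩ := hξ
    rw [hm₀]
    refine mul_ne_zero (pow_ne_zero _ (div_ne_zero ?_ two_ne_zero)) ?_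
    · intro h
      have hre := congrArg Complex.re h
      rw [Complex.add_re, Complex.exp_ofReal_mul_I_re, Complex.one_re, Complex.zero_re,
        Real.cos_neg] at hre
      have hc : 0 < Real.cos (Real.pi * ξ / 2) := by
        apply Real.cos_pos_of_mem_Ioo
        constructor <;> nlinarith [Real.pi_pos]
      have hd : Real.cos (Real.pi * ξ) = 2 * Real.cos (Real.pi * ξ / 2) ^ 2 - 1 := by
        rw [← Real.cos_two_mul]
        congr 1
        ring
      have := pow_pos hc 2
      linarith
    · have hpos : 0 < ∑ s ∈ Finset.range (n + 1), (Nat.choose (n + 1 - 1 + s) s : ℝ) *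
          (Real.sin (Real.pi * ξ / 2)) ^ (2 * s) := by
        rw [Finset.sum_range_succ']
        apply add_pos_of_nonneg_of_pos
        · apply Finset.sum_nonneg
          intro s _
          exact mul_nonneg (Nat.cast_nonneg _) ((even_two_mul _).pow_nonneg _)
        · simp
      have := hpos.ne'
      exact_mod_cast this
end
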